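/- arXiv:1110.0807 — 2 statements merged into one kernel-verified Lean document; each statement's English description precedes it below -/
import Mathlib

section
/- Let f_n : S_n → ℝ be a sequence of class functions whose distributions under P_n converge weakly. Then there is a constant C such that for all n ≥ 2, sup_{a,b ∈ ℝ} |P_n[Ū(σ) ≤ a, f_n(σ) ≤ b] − P_n[Ū(σ) ≤ a]·P_n[f_n(σ) ≤ b]| ≤ C (log n)/n^{1/6}, where Ū is the normalized Ulam statistic (length of the longest increasing subsequence). -/
open scoped BigOperators Classical
open Finset Filter

/-- Probability of an event under the uniform measure on `S_n`. -/
noncomputable def Pn {n : ℕ} (p : Equiv.Perm (Fin n) → Prop) : ℝ :=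
  ((Finset.univ.filter p).card : ℝ) / (Fintype.card (Equiv.Perm (Fin n)) : ℝ)

/-- Expectation under the uniform measure on `S_n`. -/
noncomputable def En {n : ℕ} (g : Equiv.Perm (Fin n) → ℝ) : ℝ :=
  (∑ σ : Equiv.Perm (Fin n), g σ) / (Fintype.card (Equiv.Perm (Fin n)) : ℝ)

/-- Variance under the uniform measure on `S_n`. -/
noncomputable def VarN {n : ℕ} (g : Equiv.Perm (Fin n) → ℝ) : ℝ :=
  En (fun σ => (g σ - En g) ^ 2)

/-- The length of the longest increasing subsequence of `(σ(1),…,σ(n))`: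
the largest cardinality of a set of indices on which `σ` is strictly increasing. -/
noncomputable def lisLen {n : ℕ} (σ : Equiv.Perm (Fin n)) : ℕ :=
  Finset.univ.sup fun s : Finset (Fin n) =>
    if StrictMonoOn (fun i => σ i) (s : Set (Fin n)) then s.card else 0

/-- Normalized Ulam statistic `Ū = (U − E U)/√(Var U)`. -/
noncomputable def lisLenBar {n : ℕ} (σ : Equiv.Perm (Fin n)) : ℝ :=
  ((lisLen σ : ℝ) - En (fun σ : Equiv.Perm (Fin n) => (lisLen σ : ℝ))) /
    Real.sqrt (VarN (fun σ : Equiv.Perm (Fin n) => (lisLen σ : ℝ)))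

/-!
Left multiplication by a permutation that is increasing off a small set `X` of points changes
`U` with probability at most `38 |X| / √n`: `E U ≤ 19 √n`, and forbidding the values in `X`
shortens a longest increasing subsequence on average by a fraction at most `|X| / n`. Hence events
defined by `U` are almost invariant under the rotations `x ↦ x + d`, `d < M`, each of which is
increasing off at most `d` points.

A class function `φ` whose averages over the cosets of `A_n` vanish is, in contrast, nearly
orthogonal to its rotates. Since `φ` is conjugation invariant, a translation may be replaced by the
average over the conjugacy class, whose operator norm is a maximum of character ratios. On a
two-sided ideal of functions on `S_n` these are read off from the kernel representing evaluation at
`1`; they are small because the ideal has dimension at least `n² / 64`, while a full cycle commutes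
with few permutations, and a rotation is handled one cycle at a time by restriction to Young
subgroups. Cauchy–Schwarz then gives the error `38 M / √n + √(1 / M + 46 √(M / n) (1 + log n))`, to
be used with `M ≈ n ^ (1 / 3)`. The part of a class function that is constant on the cosets of `A_n`
is handled by the transposition of the two smallest values, which is increasing off one point.
-/

/-! ### Symmetric projections -/

section SymmetricProjection

variable {E : Type*} [NormedAddCommGroup E] [InnerProductSpace ℝ E] {P A : Module.End ℝ E}

lemma symmetricProjection_mul {Q : Module.End ℝ E} (hP : P.IsSymmetricProjection)
    (hQ : Q.IsSymmetricProjection) (hPQ : Commute P Q) : (P * Q).IsSymmetricProjection :=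
  ⟨hP.isIdempotentElem.mul_of_commute hPQ hQ.isIdempotentElem,
    hP.isSymmetric.mul_of_commute hQ.isSymmetric hPQ⟩

lemma symmetricProjection_apply_sub_self (hP : P.IsSymmetricProjection) (x : E) :
    P (x - P x) = 0 := by
  rw [map_sub, ← Module.End.mul_apply, hP.isIdempotentElem, sub_self]

lemma inner_symmetricProjection_sub (hP : P.IsSymmetricProjection) (x y : E) :
    inner ℝ (P x) (y - P y) = 0 := by
  rw [hP.isSymmetric, symmetricProjection_apply_sub_self hP, inner_zero_right]

lemma norm_sq_eq_norm_sq_symmetricProjection_add (hP : P.IsSymmetricProjection) (x : E) :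
    ‖x‖ ^ 2 = ‖P x‖ ^ 2 + ‖x - P x‖ ^ 2 := by
  have pythagoras := norm_add_sq_real (P x) (x - P x)
  rwa [add_sub_cancel, inner_symmetricProjection_sub hP, mul_zero, add_zero] at pythagoras

lemma norm_sub_symmetricProjection_le (hP : P.IsSymmetricProjection) (x : E) :
    ‖x - P x‖ ≤ ‖x‖ := by
  rw [← sq_le_sq₀ (norm_nonneg _) (norm_nonneg _),
    norm_sq_eq_norm_sq_symmetricProjection_add hP x]
  exact le_add_of_nonneg_left (sq_nonneg _)

lemma norm_apply_le_of_symmetricProjection (hP : P.IsSymmetricProjection) (hAP : Commute A P)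
    {ε : ℝ} (hε : 0 ≤ ε) {x : E} (h_range : ‖A (P x)‖ ≤ ε * ‖P x‖)
    (h_ker : ‖A (x - P x)‖ ≤ ε * ‖x - P x‖) : ‖A x‖ ≤ ε * ‖x‖ := by
  have hA_range : A (P x) = P (A x) := DFunLike.congr_fun hAP.eq x
  rw [← sq_le_sq₀ (norm_nonneg _) (by positivity), mul_pow,
    norm_sq_eq_norm_sq_symmetricProjection_add hP x,
    norm_sq_eq_norm_sq_symmetricProjection_add hP (A x), ← hA_range, ← map_sub, mul_add,
    ← mul_pow, ← mul_pow]
  gcongr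

lemma abs_inner_apply_le_of_symmetricProjection (hP : P.IsSymmetricProjection)
    (hAP : Commute A P) (hA : ∀ x, ‖A x‖ ≤ ‖x‖) {ε : ℝ}
    (h_ker : ∀ z, P z = 0 → ‖A z‖ ≤ ε * ‖z‖) (hε : 0 ≤ ε) (x : E) :
    |inner ℝ x (A x)| ≤ ε * ‖x‖ ^ 2 + inner ℝ x (P x) := by
  have hA_range (z : E) : A (P z) = P (A z) := DFunLike.congr_fun hAP.eq z
  set z := x - P x with hz
  have hPz : P z = 0 := symmetricProjection_apply_sub_self hP x
  have h_split : inner ℝ x (A x) = inner ℝ (P x) (A (P x)) + inner ℝ z (A z) := by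
    have hx : x = P x + z := by rw [hz, add_sub_cancel]
    have h_cross₁ : inner ℝ (P x) (A z) = 0 := by
      rw [hP.isSymmetric, ← hA_range, hPz, map_zero, inner_zero_right]
    have h_cross₂ : inner ℝ z (A (P x)) = 0 := by
      rw [hA_range, ← hP.isSymmetric, hPz, inner_zero_left]
    conv_lhs => rw [hx]
    rw [map_add, inner_add_left, inner_add_right, inner_add_right, h_cross₁, h_cross₂]
    ring
  have h_range : |inner ℝ (P x) (A (P x))| ≤ inner ℝ x (P x) := by
    have hPx : inner ℝ x (P x) = ‖P x‖ * ‖P x‖ := by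
      rw [← real_inner_self_eq_norm_mul_norm, hP.isSymmetric, ← Module.End.mul_apply,
        hP.isIdempotentElem]
    rw [hPx]
    exact (abs_real_inner_le_norm _ _).trans (by gcongr; exact hA _)
  have h_perp : |inner ℝ z (A z)| ≤ ε * ‖x‖ ^ 2 := calc
    _ ≤ ‖z‖ * (ε * ‖z‖) := (abs_real_inner_le_norm _ _).trans (by gcongr; exact h_ker z hPz)
    _ = ε * ‖z‖ ^ 2 := by ring
    _ ≤ ε * ‖x‖ ^ 2 := by gcongr; exact norm_sub_symmetricProjection_le hP x
  rw [h_split]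
  linarith [abs_add_le (inner ℝ (P x) (A (P x))) (inner ℝ z (A z))]

lemma abs_inner_mul_apply_le_of_symmetricProjection {Q B : Module.End ℝ E}
    (hP : P.IsSymmetricProjection) (hQ : Q.IsSymmetricProjection) (hPQ : Commute P Q)
    (hAB : Commute A B) (hAP : Commute A P) (hAQ : Commute A Q) (hBP : Commute B P)
    (hBQ : Commute B Q) (hA : ∀ x, ‖A x‖ ≤ ‖x‖) (hB : ∀ x, ‖B x‖ ≤ ‖x‖) {ε : ℝ} (hε : 0 ≤ ε)
    (hA_ker : ∀ z, P z = 0 → ‖A z‖ ≤ ε * ‖z‖) (hB_ker : ∀ z, Q z = 0 → ‖B z‖ ≤ ε * ‖z‖) (x : E) :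
    |inner ℝ x ((A * B) x)| ≤ ε * ‖x‖ ^ 2 + inner ℝ x ((P * Q) x) := by
  refine abs_inner_apply_le_of_symmetricProjection (symmetricProjection_mul hP hQ hPQ)
    ((hAP.mul_right hAQ).mul_left (hBP.mul_right hBQ)) (fun x ↦ (hA _).trans (hB x))
    (fun z hz ↦ ?_) hε x
  refine norm_apply_le_of_symmetricProjection hQ (hAQ.mul_left hBQ) hε ?_ ?_
  · rw [hAB.eq]
    exact (hB _).trans (hA_ker _ hz)
  · exact (hA _).trans (hB_ker _ (symmetricProjection_apply_sub_self hQ z))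

end SymmetricProjection

/-! ### Averages of an orthogonal representation -/

section Average

variable {E : Type*} [NormedAddCommGroup E] [InnerProductSpace ℝ E]
variable {G : Type*} [Group G] (ρ : G →* (E ≃ₗᵢ[ℝ] E))

lemma inner_rep_left (a : G) (x y : E) : inner ℝ (ρ a x) y = inner ℝ x (ρ a⁻¹ y) := by
  rw [map_inv]
  exact (ρ a).inner_map_eq_flip x y

/-- The mean of the isometries `ρ (c k)` over a finite family `c` of group elements. -/
noncomputable def average {κ : Type*} [Fintype κ] (c : κ → G) : Module.End ℝ E :=
  (Fintype.card κ : ℝ)⁻¹ • ∑ k, (ρ (c k)).toLinearEquiv.toLinearMap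

variable {κ : Type*} [Fintype κ] (c : κ → G)

lemma average_apply (x : E) : average ρ c x = (Fintype.card κ : ℝ)⁻¹ • ∑ k, ρ (c k) x := by
  simp [average]

variable {c} in
lemma average_apply_eq_self [Nonempty κ] {x : E} (h : ∀ k, ρ (c k) x = x) :
    average ρ c x = x := by
  have : (Fintype.card κ : ℝ) ≠ 0 := by simp
  simp only [average_apply, h, sum_const, card_univ, ← Nat.cast_smul_eq_nsmul ℝ, smul_smul]
  rw [inv_mul_cancel₀ this, one_smul]

lemma average_comp_equiv {κ' : Type*} [Fintype κ'] (e : κ' ≃ κ) :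
    average ρ (c ∘ e) = average ρ c := by
  ext x
  simp only [average_apply, Function.comp_apply, Fintype.card_congr e,
    Equiv.sum_comp e (fun k ↦ ρ (c k) x)]

lemma norm_average_le (x : E) : ‖average ρ c x‖ ≤ ‖x‖ := by
  rcases isEmpty_or_nonempty κ with h | h
  · simp [average_apply]
  have hκ : (0 : ℝ) < Fintype.card κ := by exact_mod_cast Fintype.card_pos
  have h_sum : ‖∑ k, ρ (c k) x‖ ≤ Fintype.card κ * ‖x‖ := by
    simpa using norm_sum_le univ (fun k ↦ ρ (c k) x)
  rwa [average_apply, norm_smul, norm_inv, Real.norm_natCast, inv_mul_le_iff₀ hκ]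

lemma inner_average_left (x y : E) :
    inner ℝ (average ρ c x) y = inner ℝ x (average ρ (fun k ↦ (c k)⁻¹) y) := by
  simp only [average_apply, inner_smul_left, inner_smul_right, sum_inner, inner_sum,
    inner_rep_left, conj_trivial]

variable {ρ c} in
lemma map_average {E' G' : Type*} [NormedAddCommGroup E'] [InnerProductSpace ℝ E'] [Group G']
    {ρ' : G' →* (E' ≃ₗᵢ[ℝ] E')} {c' : κ → G'} {Φ : E →ₗ[ℝ] E'}
    (h : ∀ k x, Φ (ρ (c k) x) = ρ' (c' k) (Φ x)) (x : E) :
    Φ (average ρ c x) = average ρ' c' (Φ x) := by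
  simp only [average_apply, map_smul, map_sum, h]

variable {ρ c} in
lemma commute_average {A : Module.End ℝ E} (h : ∀ k x, A (ρ (c k) x) = ρ (c k) (A x)) :
    Commute A (average ρ c) :=
  LinearMap.ext fun x ↦ map_average h x

/-- The mean of `ρ` over a finite subgroup, i.e. the projection onto its fixed vectors. -/
noncomputable def subgroupAverage (N : Subgroup G) [Fintype N] : Module.End ℝ E :=
  average ρ ((↑) : N → G)

/-- The mean of `ρ` over the conjugates of `g`, indexed by the conjugating element. -/
noncomputable def classAverage [Fintype G] (g : G) : Module.End ℝ E :=
  average ρ fun y ↦ y * g * y⁻¹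

lemma rep_subgroupAverage {N : Subgroup G} [Fintype N] {a : G} (ha : a ∈ N) (x : E) :
    ρ a (subgroupAverage ρ N x) = subgroupAverage ρ N x := by
  have h_shift : ∑ h : N, ρ (a * h) x = ∑ h : N, ρ h x :=
    Equiv.sum_comp (Equiv.mulLeft (⟨a, ha⟩ : N)) (fun h ↦ ρ (h : G) x)
  simp only [subgroupAverage, average_apply, map_smul, map_sum]
  simpa only [map_mul, LinearIsometryEquiv.coe_mul, Function.comp_apply] using congrArg _ h_shift

lemma symmetricProjection_subgroupAverage (N : Subgroup G) [Fintype N] :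
    (subgroupAverage ρ N).IsSymmetricProjection where
  isIdempotentElem :=
    LinearMap.ext fun x ↦ average_apply_eq_self ρ fun a ↦ rep_subgroupAverage ρ a.2 x
  isSymmetric x y := by
    rw [subgroupAverage, inner_average_left]
    exact congrArg (inner ℝ x <| · y) (average_comp_equiv ρ ((↑) : N → G) (Equiv.inv N))

lemma rep_comm_subgroupAverage (N : Subgroup G) [Fintype N] [N.Normal] (a : G) (x : E) :
    ρ a (subgroupAverage ρ N x) = subgroupAverage ρ N (ρ a x) := by
  have h_conj := map_average (ρ := ρ) (ρ' := ρ) (c := ((↑) : N → G))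
    (c' := fun h ↦ (MulAut.conjNormal a h : G)) (Φ := (ρ a).toLinearEquiv.toLinearMap)
    (fun h x ↦ by simp [MulAut.conjNormal_apply]) x
  exact h_conj.trans (LinearMap.congr_fun (average_comp_equiv ρ _ (MulAut.conjNormal a).toEquiv) _)

variable [Fintype G]

lemma rep_comm_classAverage (g a : G) (x : E) :
    ρ a (classAverage ρ g x) = classAverage ρ g (ρ a x) := by
  have h_conj := map_average (ρ := ρ) (ρ' := ρ) (c := fun y ↦ y * g * y⁻¹)
    (c' := fun y ↦ a * y * g * (a * y)⁻¹) (Φ := (ρ a).toLinearEquiv.toLinearMap)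
    (fun h x ↦ by simp [mul_assoc]) x
  have h_shift := average_comp_equiv ρ (fun y ↦ y * g * y⁻¹) (Equiv.mulLeft a)
  exact h_conj.trans (LinearMap.congr_fun h_shift _)

lemma commute_classAverage_subgroupAverage (g : G) (N : Subgroup G) [Fintype N] :
    Commute (classAverage ρ g) (subgroupAverage ρ N) :=
  commute_average fun a x ↦ (rep_comm_classAverage ρ g a x).symm

lemma isSymmetric_classAverage {g : G} (hg : IsConj g g⁻¹) : (classAverage ρ g).IsSymmetric := by
  intro x y
  obtain ⟨b, hb⟩ := isConj_iff.1 hg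
  have h_inv : (fun y ↦ (y * g * y⁻¹)⁻¹) = (fun y ↦ y * g * y⁻¹) ∘ Equiv.mulRight b := by
    ext y
    simp [← hb, mul_assoc]
  rw [classAverage, inner_average_left, h_inv, average_comp_equiv]

end Average

/-! ### The regular representations and the spectral gap of a conjugacy class -/

section Regular

/-- A function on a group that is constant on conjugacy classes. -/
def IsClassFunction {G κ : Type*} [Group G] (f : G → κ) : Prop :=
  ∀ a σ, f (a * σ * a⁻¹) = f σ

/-- The restriction of a function to the coset `ι(H) σ`, read as a function on `H`. -/
noncomputable def cosetRestrict {G H : Type*} [Group G] [Group H] (ι : H →* G) (σ : G) :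
    EuclideanSpace ℝ G →ₗ[ℝ] EuclideanSpace ℝ H where
  toFun f := WithLp.toLp 2 fun h ↦ f (ι h * σ)
  map_add' _ _ := by ext; simp
  map_smul' _ _ := by ext; simp

lemma cosetRestrict_apply {G H : Type*} [Group G] [Group H] (ι : H →* G) (σ : G)
    (f : EuclideanSpace ℝ G) (h : H) :
    cosetRestrict ι σ f h = f (ι h * σ) := rfl

variable (G : Type*) [Group G] [Fintype G]

/-- The left regular representation on real functions, `(a • f) σ = f (a⁻¹ σ)`. -/
noncomputable def leftReg : G →* (EuclideanSpace ℝ G ≃ₗᵢ[ℝ] EuclideanSpace ℝ G) where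
  toFun a := LinearIsometryEquiv.piLpCongrLeft 2 ℝ ℝ (Equiv.mulLeft a)
  map_one' := by ext f σ; simp [← Equiv.Perm.inv_def]
  map_mul' a b := by ext f σ; simp [← Equiv.Perm.inv_def]

/-- The right regular representation on real functions, `(a • f) σ = f (σ a)`. -/
noncomputable def rightReg : G →* (EuclideanSpace ℝ G ≃ₗᵢ[ℝ] EuclideanSpace ℝ G) where
  toFun a := LinearIsometryEquiv.piLpCongrLeft 2 ℝ ℝ (Equiv.mulRight a⁻¹)
  map_one' := by ext f σ; simp [← Equiv.Perm.inv_def]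
  map_mul' a b := by ext f σ; simp [← Equiv.Perm.inv_def]

variable {G}

@[simp]
lemma leftReg_apply (a : G) (f : EuclideanSpace ℝ G) (σ : G) : leftReg G a f σ = f (a⁻¹ * σ) := by
  simp [leftReg]

@[simp]
lemma rightReg_apply (a : G) (f : EuclideanSpace ℝ G) (σ : G) : rightReg G a f σ = f (σ * a) := by
  simp [rightReg]

lemma leftReg_rightReg_comm (a b : G) (f : EuclideanSpace ℝ G) :
    leftReg G a (rightReg G b f) = rightReg G b (leftReg G a f) := by
  ext σ
  simp [mul_assoc]

lemma average_leftReg_apply {κ : Type*} [Fintype κ] (c : κ → G) (f : EuclideanSpace ℝ G) (σ : G) :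
    average (leftReg G) c f σ = 𝔼 k, f ((c k)⁻¹ * σ) := by
  simp [average_apply, Fintype.expect_eq_sum_div_card, div_eq_inv_mul]

lemma rightReg_comm_average {κ : Type*} [Fintype κ] (c : κ → G) (a : G) (f : EuclideanSpace ℝ G) :
    rightReg G a (average (leftReg G) c f) = average (leftReg G) c (rightReg G a f) :=
  map_average (Φ := (rightReg G a).toLinearEquiv.toLinearMap)
    (fun k f ↦ (leftReg_rightReg_comm (c k) a f).symm) f

lemma subgroupAverage_rightReg (N : Subgroup G) [Fintype N]
    [N.Normal] : subgroupAverage (rightReg G) N = subgroupAverage (leftReg G) N := by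
  ext f σ
  simp only [subgroupAverage, average_apply, PiLp.smul_apply, WithLp.ofLp_sum, Finset.sum_apply,
    leftReg_apply, rightReg_apply]
  congr 1
  refine Fintype.sum_equiv ((MulAut.conjNormal σ).toEquiv.trans (Equiv.inv N)) _ _ fun h ↦ ?_
  simp [MulAut.conjNormal_apply]

lemma classAverage_leftReg_apply_one {f : EuclideanSpace ℝ G} (hf : IsClassFunction f) (g : G) :
    classAverage (leftReg G) g f 1 = f g⁻¹ := by
  have h_conj (y : G) : f ((y * g * y⁻¹)⁻¹ * 1) = f g⁻¹ := by
    rw [← hf y g⁻¹]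
    group
  rw [classAverage, average_leftReg_apply]
  simp only [h_conj, Fintype.expect_const]

lemma inner_leftReg_conj {f : EuclideanSpace ℝ G} (hf : IsClassFunction f) (a g : G) :
    inner ℝ f (leftReg G (a * g * a⁻¹) f) = inner ℝ f (leftReg G g f) := by
  have h_invariant : leftReg G a⁻¹ f = rightReg G a f := by
    ext σ
    rw [leftReg_apply, rightReg_apply, inv_inv, ← hf a (σ * a)]
    group
  rw [map_mul, map_mul, LinearIsometryEquiv.coe_mul, LinearIsometryEquiv.coe_mul,
    Function.comp_apply, Function.comp_apply, ← inv_inv a, ← inner_rep_left, inv_inv, h_invariant,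
    leftReg_rightReg_comm, LinearIsometryEquiv.inner_map_map]

/-- `ClassGap N g ε`: on functions whose average over every coset of `N` vanishes, averaging over
the conjugacy class of `g` has operator norm at most `ε`. -/
def ClassGap (N : Subgroup G) [Fintype N] (g : G) (ε : ℝ) : Prop :=
  ∀ f : EuclideanSpace ℝ G, subgroupAverage (leftReg G) N f = 0 →
    ‖classAverage (leftReg G) g f‖ ≤ ε * ‖f‖

lemma ClassGap.mono {N : Subgroup G} [Fintype N] {g : G} {ε ε' : ℝ} (h : ClassGap N g ε)
    (hε : ε ≤ ε') : ClassGap N g ε' :=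
  fun f hf ↦ (h f hf).trans (by gcongr)

variable {H : Type*} [Group H] [Fintype H]

lemma cosetRestrict_leftReg (ι : H →* G) (σ : G) (a : H) (f : EuclideanSpace ℝ G) :
    cosetRestrict ι σ ((leftReg G).comp ι a f) = leftReg H a (cosetRestrict ι σ f) := by
  ext h
  simp [cosetRestrict_apply, mul_assoc]

lemma sum_norm_sq_cosetRestrict (ι : H →* G) (f : EuclideanSpace ℝ G) :
    ∑ σ, ‖cosetRestrict ι σ f‖ ^ 2 = Fintype.card H * ‖f‖ ^ 2 := by
  have h_shift (h : H) : ∑ σ, f (ι h * σ) ^ 2 = ∑ σ, f σ ^ 2 :=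
    Equiv.sum_comp (Equiv.mulLeft (ι h)) fun σ ↦ f σ ^ 2
  simp only [EuclideanSpace.real_norm_sq_eq, cosetRestrict_apply]
  rw [sum_comm]
  simp [h_shift]

lemma ClassGap.norm_classAverage_comp_le {N : Subgroup H} [Fintype N] {g : H} {ε : ℝ}
    (hg : ClassGap N g ε) (hε : 0 ≤ ε) (ι : H →* G) {f : EuclideanSpace ℝ G}
    (hf : subgroupAverage ((leftReg G).comp ι) N f = 0) :
    ‖classAverage ((leftReg G).comp ι) g f‖ ≤ ε * ‖f‖ := by
  have h_coset (σ : G) : ‖cosetRestrict ι σ (classAverage ((leftReg G).comp ι) g f)‖ ^ 2 ≤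
      ε ^ 2 * ‖cosetRestrict ι σ f‖ ^ 2 := by
    rw [classAverage, map_average (fun y f ↦ cosetRestrict_leftReg ι σ (y * g * y⁻¹) f),
      ← mul_pow]
    gcongr
    refine hg _ ?_
    rw [subgroupAverage,
      ← map_average (c := ((↑) : N → H)) (fun h f ↦ cosetRestrict_leftReg ι σ h f)]
    exact (congrArg _ hf).trans (map_zero _)
  have h_sum := sum_le_sum fun σ (_ : σ ∈ univ) ↦ h_coset σ
  rw [← mul_sum, sum_norm_sq_cosetRestrict, sum_norm_sq_cosetRestrict, mul_left_comm,
    ← mul_pow] at h_sum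
  have hH : (0 : ℝ) < Fintype.card H := by exact_mod_cast Fintype.card_pos
  exact (sq_le_sq₀ (norm_nonneg _) (by positivity)).1 (le_of_mul_le_mul_left h_sum hH)

end Regular

/-! ### Reproducing kernels of two-sided ideals -/

section Kernel

variable {G : Type*} [Group G] [Fintype G]

/-- A two-sided ideal of the group algebra, seen as a space of functions. -/
structure IsIdeal (W : Submodule ℝ (EuclideanSpace ℝ G)) : Prop where
  left : ∀ a, ∀ f ∈ W, leftReg G a f ∈ W
  right : ∀ a, ∀ f ∈ W, rightReg G a f ∈ W

/-- The function in `W` representing evaluation at `1`. For a two-sided ideal it is a nonnegative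
combination of the characters that occur in `W`. -/
noncomputable def idealKernel (W : Submodule ℝ (EuclideanSpace ℝ G)) : EuclideanSpace ℝ G :=
  W.starProjection (EuclideanSpace.single 1 1)

variable {W : Submodule ℝ (EuclideanSpace ℝ G)}

variable (W) in
lemma idealKernel_mem : idealKernel W ∈ W := Submodule.starProjection_apply_mem _ _

lemma inner_idealKernel {f : EuclideanSpace ℝ G} (hf : f ∈ W) :
    inner ℝ f (idealKernel W) = f 1 := by
  rw [idealKernel, ← W.inner_starProjection_left_eq_right,
    Submodule.starProjection_eq_self_iff.2 hf]
  simp [EuclideanSpace.inner_single_right]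

lemma eq_idealKernel {e : EuclideanSpace ℝ G} (he : e ∈ W) (h : ∀ f ∈ W, inner ℝ f e = f 1) :
    e = idealKernel W := by
  have hmem := W.sub_mem he (idealKernel_mem W)
  rw [← sub_eq_zero, ← inner_self_eq_zero (𝕜 := ℝ), inner_sub_right, h _ hmem,
    inner_idealKernel hmem, sub_self]

lemma inner_leftReg_idealKernel (hW : IsIdeal W) {f : EuclideanSpace ℝ G} (hf : f ∈ W) (σ : G) :
    inner ℝ f (leftReg G σ (idealKernel W)) = f σ := by
  rw [← inv_inv σ, ← inner_rep_left, inner_idealKernel (hW.left _ _ hf), leftReg_apply, inv_inv,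
    mul_one]

lemma isClassFunction_idealKernel (hW : IsIdeal W) : IsClassFunction (idealKernel W) := by
  intro a σ
  have h_conj : leftReg G a⁻¹ (rightReg G a⁻¹ (idealKernel W)) = idealKernel W := by
    refine eq_idealKernel (hW.left _ _ (hW.right _ _ (idealKernel_mem W))) fun f hf ↦ ?_
    rw [← inner_rep_left, ← inner_rep_left, inner_idealKernel (hW.right _ _ (hW.left _ _ hf))]
    simp
  conv_rhs => rw [← h_conj]
  rw [leftReg_apply, rightReg_apply, inv_inv]

variable (W) in
lemma idealKernel_one : idealKernel W 1 = ‖idealKernel W‖ ^ 2 := by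
  rw [← inner_idealKernel (idealKernel_mem W), real_inner_self_eq_norm_sq]

lemma idealKernel_one_pos (hW : IsIdeal W) (hne : W ≠ ⊥) : 0 < idealKernel W 1 := by
  rw [idealKernel_one]
  have h_ne : idealKernel W ≠ 0 := by
    refine fun h ↦ hne ((Submodule.eq_bot_iff W).2 fun f hf ↦ ?_)
    ext σ
    rw [← inner_leftReg_idealKernel hW hf, h, map_zero, inner_zero_right, PiLp.zero_apply]
  positivity

lemma finrank_eq_card_mul_idealKernel_one (hW : IsIdeal W) :
    (Module.finrank ℝ W : ℝ) = Fintype.card G * idealKernel W 1 := by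
  let b := stdOrthonormalBasis ℝ W
  have h_bessel (σ : G) : ∑ i, (b i : EuclideanSpace ℝ G) σ ^ 2 = idealKernel W 1 := by
    have h_parseval :=
      b.sum_sq_norm_inner_right ⟨leftReg G σ (idealKernel W), hW.left σ _ (idealKernel_mem W)⟩
    simpa only [Submodule.coe_inner, inner_leftReg_idealKernel hW (b _).2, Real.norm_eq_abs, sq_abs,
      Submodule.coe_norm, LinearIsometryEquiv.norm_map, ← idealKernel_one] using h_parseval
  have h_unit (i) : ∑ σ, (b i : EuclideanSpace ℝ G) σ ^ 2 = 1 := by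
    rw [← EuclideanSpace.real_norm_sq_eq, ← Submodule.coe_norm, b.norm_eq_one, one_pow]
  calc (Module.finrank ℝ W : ℝ) = ∑ i, ∑ σ, (b i : EuclideanSpace ℝ G) σ ^ 2 := by simp [h_unit]
    _ = Fintype.card G * idealKernel W 1 := by rw [sum_comm]; simp [h_bessel]

lemma norm_apply_le_of_forall_eigenvalue {E : Type*} [NormedAddCommGroup E]
    [InnerProductSpace ℝ E] [FiniteDimensional ℝ E] {S : Module.End ℝ E} (hS : S.IsSymmetric)
    {ε : ℝ} (hε : 0 ≤ ε) (h : ∀ r, S.HasEigenvalue r → |r| ≤ ε) (x : E) : ‖S x‖ ≤ ε * ‖x‖ := by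
  let b := hS.eigenvectorBasis rfl
  rw [← sq_le_sq₀ (norm_nonneg _) (by positivity), mul_pow, ← b.sum_sq_norm_inner_right (S x),
    ← b.sum_sq_norm_inner_right x, mul_sum]
  refine sum_le_sum fun i _ ↦ ?_
  rw [← hS (b i) x, hS.apply_eigenvectorBasis, inner_smul_left, norm_mul, mul_pow]
  gcongr
  simpa using h _ (hS.hasEigenvalue_eigenvalues rfl i)

variable {N : Subgroup G} [Fintype N]

lemma isIdeal_eigenspace [N.Normal] (g : G) (r : ℝ) :
    IsIdeal (Module.End.eigenspace
      (classAverage (leftReg G) g * (1 - subgroupAverage (leftReg G) N)) r) := by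
  constructor <;> intro a f hf <;> rw [Module.End.mem_eigenspace_iff] at hf ⊢
  · simpa [rep_comm_classAverage, rep_comm_subgroupAverage] using congrArg (leftReg G a) hf
  · simpa [classAverage, subgroupAverage, rightReg_comm_average]
      using congrArg (rightReg G a) hf

lemma subgroupAverage_eq_zero_of_mem_eigenspace {g : G} {r : ℝ} (hr : r ≠ 0)
    {f : EuclideanSpace ℝ G} (hf : f ∈ Module.End.eigenspace
      (classAverage (leftReg G) g * (1 - subgroupAverage (leftReg G) N)) r) :
    subgroupAverage (leftReg G) N f = 0 := by
  set T := classAverage (leftReg G) g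
  set P := subgroupAverage (leftReg G) N
  have hP : P.IsSymmetricProjection := symmetricProjection_subgroupAverage _ _
  have hTP : Commute T P := commute_classAverage_subgroupAverage _ _ _
  have h_zero : P * (T * (1 - P)) = 0 := by
    rw [← mul_assoc, ← hTP.eq, mul_assoc, mul_sub, mul_one, hP.isIdempotentElem.eq, sub_self,
      mul_zero]
  have h_apply := LinearMap.congr_fun h_zero f
  rw [Module.End.mul_apply, Module.End.mem_eigenspace_iff.1 hf, map_smul] at h_apply
  exact (smul_eq_zero.1 h_apply).resolve_left hr

theorem ClassGap.of_idealKernel [N.Normal] {g : G} (hg : IsConj g g⁻¹) {ε : ℝ} (hε : 0 ≤ ε)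
    (h : ∀ W, IsIdeal W → W ≠ ⊥ → (∀ f ∈ W, subgroupAverage (leftReg G) N f = 0) →
      |idealKernel W g| ≤ ε * idealKernel W 1) : ClassGap N g ε := by
  set T := classAverage (leftReg G) g
  set P := subgroupAverage (leftReg G) N
  have hP : P.IsSymmetricProjection := symmetricProjection_subgroupAverage _ _
  have hS : (T * (1 - P)).IsSymmetric :=
    (isSymmetric_classAverage _ hg).mul_of_commute (LinearMap.IsSymmetric.id.sub hP.isSymmetric)
      ((Commute.one_right T).sub_right (commute_classAverage_subgroupAverage _ _ _))
  have h_apply {f : EuclideanSpace ℝ G} (hf : P f = 0) : (T * (1 - P)) f = T f := by simp [hf]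
  have h_eigenvalue (r : ℝ) (hr : (T * (1 - P)).HasEigenvalue r) : |r| ≤ ε := by
    by_cases hr0 : r = 0
    · simpa [hr0] using hε
    set W := Module.End.eigenspace (T * (1 - P)) r
    have hW : IsIdeal W := isIdeal_eigenspace g r
    have hWP (f) (hf : f ∈ W) : P f = 0 := subgroupAverage_eq_zero_of_mem_eigenspace hr0 hf
    have h_kernel : idealKernel W g = r * idealKernel W 1 := by
      obtain ⟨b, hb⟩ := isConj_iff.1 hg
      rw [← isClassFunction_idealKernel hW b g, hb,
        ← classAverage_leftReg_apply_one (isClassFunction_idealKernel hW),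
        ← h_apply (hWP _ (idealKernel_mem W)), Module.End.mem_eigenspace_iff.1 (idealKernel_mem W)]
      simp
    have h_bound := h W hW hr hWP
    have h_pos := idealKernel_one_pos hW hr
    rw [h_kernel, abs_mul, abs_of_pos h_pos] at h_bound
    exact le_of_mul_le_mul_right h_bound h_pos
  intro f hf
  rw [← h_apply hf]
  exact norm_apply_le_of_forall_eigenvalue hS hε h_eigenvalue f

end Kernel

/-! ### Counting conjugacies within a family of group elements -/

section ConjCount

variable {G : Type*} [Group G] [Fintype G] {κ : Type*} [Fintype κ] (c : κ → G)

/-- The number of ways to write `σ` as a conjugate `y * c k * y⁻¹`. -/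
noncomputable def conjMultiplicity (σ : G) : ℕ :=
  #{t : G × κ | t.1 * c t.2 * t.1⁻¹ = σ}

/-- The number of triples `(y, k, l)` with `y * c k * y⁻¹ = c l`. -/
noncomputable def conjCount : ℕ := ∑ l, conjMultiplicity c (c l)

lemma isClassFunction_conjMultiplicity : IsClassFunction (conjMultiplicity c) := by
  intro a σ
  refine card_equiv ((Equiv.mulLeft a⁻¹).prodCongr (Equiv.refl κ)) fun ⟨y, k⟩ ↦ ?_
  simp only [mem_filter_univ, Equiv.prodCongr_apply, Prod.map, Equiv.coe_mulLeft, Equiv.refl_apply]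
  rw [← (MulAut.conj a⁻¹).injective.eq_iff]
  simp [mul_assoc]

variable {c} in
lemma sum_mul_conjMultiplicity {f : G → ℝ} (hf : IsClassFunction f) :
    ∑ σ, f σ * conjMultiplicity c σ = Fintype.card G * ∑ k, f (c k) := by
  simp only [conjMultiplicity, card_filter, Nat.cast_sum, Nat.cast_ite, Nat.cast_one,
    Nat.cast_zero, mul_sum, mul_ite, mul_one, mul_zero]
  rw [sum_comm]
  simp [Fintype.sum_prod_type, hf _ _, mul_sum]

variable {c} in
lemma card_mul_sq_sum_le {f : G → ℝ} (hf : IsClassFunction f) :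
    Fintype.card G * (∑ k, f (c k)) ^ 2 ≤ (∑ σ, f σ ^ 2) * conjCount c := by
  have h_class : IsClassFunction fun σ ↦ (conjMultiplicity c σ : ℝ) := fun a σ ↦
    congrArg Nat.cast (isClassFunction_conjMultiplicity c a σ)
  have h_sq : ∑ σ, (conjMultiplicity c σ : ℝ) ^ 2 = Fintype.card G * conjCount c := by
    simp only [sq, sum_mul_conjMultiplicity h_class, conjCount, Nat.cast_sum]
  have h_cauchy := sum_mul_sq_le_sq_mul_sq univ f (fun σ ↦ (conjMultiplicity c σ : ℝ))
  rw [sum_mul_conjMultiplicity hf, h_sq, mul_pow, sq, mul_assoc, mul_left_comm (∑ σ, f σ ^ 2)]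
    at h_cauchy
  exact le_of_mul_le_mul_left h_cauchy (by exact_mod_cast Fintype.card_pos)

lemma conjCount_comp_le {κ' : Type*} [Fintype κ'] {j : κ' → κ} (hj : Function.Injective j) :
    conjCount (c ∘ j) ≤ conjCount c := by
  have h_mult (σ : G) : conjMultiplicity (c ∘ j) σ ≤ conjMultiplicity c σ := by
    refine card_le_card_of_injOn (Prod.map id j) (fun t ht ↦ ?_)
      (Function.injective_id.prodMap hj).injOn
    simpa using ht
  calc conjCount (c ∘ j) ≤ ∑ l, conjMultiplicity c (c (j l)) := sum_le_sum fun l _ ↦ h_mult _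
    _ = ∑ l ∈ univ.map ⟨j, hj⟩, conjMultiplicity c (c l) := by simp
    _ ≤ conjCount c := sum_le_sum_of_subset (subset_univ _)

lemma abs_expect_idealKernel_le {W : Submodule ℝ (EuclideanSpace ℝ G)} (hW : IsIdeal W)
    (hne : W ≠ ⊥) {D r : ℝ} (hD : 0 < D) (hDW : D ≤ Module.finrank ℝ W)
    (hr : conjCount c ≤ r * Fintype.card κ ^ 2) :
    |𝔼 k, idealKernel W (c k)| ≤ √(r / D) * idealKernel W 1 := by
  rcases isEmpty_or_nonempty κ with _ | _
  · simpa using mul_nonneg (Real.sqrt_nonneg _) (idealKernel_one_pos hW hne).le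
  set e := idealKernel W
  have he := idealKernel_one_pos hW hne
  have : (0 : ℝ) < Fintype.card κ := by exact_mod_cast Fintype.card_pos
  have h_sum : D * (∑ k, e (c k)) ^ 2 ≤ e 1 ^ 2 * (r * Fintype.card κ ^ 2) := calc
    _ ≤ (Fintype.card G * e 1) * (∑ k, e (c k)) ^ 2 := by
      rw [← finrank_eq_card_mul_idealKernel_one hW]
      gcongr
    _ = e 1 * (Fintype.card G * (∑ k, e (c k)) ^ 2) := by ring
    _ ≤ e 1 * (e 1 * conjCount c) := by
      refine mul_le_mul_of_nonneg_left ?_ he.le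
      simpa only [e, idealKernel_one, EuclideanSpace.real_norm_sq_eq]
        using card_mul_sq_sum_le (c := c) (isClassFunction_idealKernel hW)
    _ ≤ e 1 * (e 1 * (r * Fintype.card κ ^ 2)) := by gcongr
    _ = _ := by ring
  have h_sq : (𝔼 k, e (c k)) ^ 2 ≤ r / D * e 1 ^ 2 := by
    rw [Fintype.expect_eq_sum_div_card, div_pow, div_mul_eq_mul_div, div_le_div_iff₀ (by positivity)
      hD]
    linarith
  rw [← Real.sqrt_sq he.le, ← Real.sqrt_mul' _ (sq_nonneg _)]
  exact Real.abs_le_sqrt h_sq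

lemma inner_idealKernel_average {W : Submodule ℝ (EuclideanSpace ℝ G)} (hW : IsIdeal W) :
    inner ℝ (idealKernel W) (average (leftReg G) c (idealKernel W)) = 𝔼 k, idealKernel W (c k) := by
  simp only [average_apply, inner_smul_right, inner_sum,
    inner_leftReg_idealKernel hW (idealKernel_mem W), Fintype.expect_eq_sum_div_card,
    div_eq_inv_mul]

end ConjCount

/-! ### Double cosets -/

section DoubleCoset

variable {H G : Type*} [Group H] [Group G]

/-- The action of `H × H` on `G` through `ι : H →* G`, `(a, b) • z = ι a * z * (ι b)⁻¹`; its orbits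
are the double cosets of the range of `ι`. -/
abbrev doubleCosetAction (ι : H →* G) : MulAction (H × H) G where
  smul q z := ι q.1 * z * (ι q.2)⁻¹
  one_smul z := by
    change ι 1 * z * (ι 1)⁻¹ = z
    simp
  mul_smul q r z := by
    change ι (q.1 * r.1) * z * (ι (q.2 * r.2))⁻¹ = ι q.1 * (ι r.1 * z * (ι r.2)⁻¹) * (ι q.2)⁻¹
    simp [mul_assoc]

lemma conjCount_le_of_doubleCoset_invariant [Fintype H] [Fintype G] (ι : H →* G) {κ : Type*}
    [Fintype κ] (inv : G → κ)
    (h_inv : ∀ z w, inv z = inv w → ∃ a b, ι a * z * (ι b)⁻¹ = w) :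
    conjCount ι ≤ Fintype.card κ * Fintype.card H ^ 2 := by
  let _ := doubleCosetAction ι
  have h_orbits : Fintype.card (Quotient (MulAction.orbitRel (H × H) G)) ≤ Fintype.card κ := by
    refine Fintype.card_le_of_injective (fun q ↦ inv q.out) fun q r hqr ↦ ?_
    obtain ⟨a, b, hab⟩ := h_inv _ _ hqr
    rw [← Quotient.out_eq q, ← Quotient.out_eq r]
    exact (Quotient.sound (s := MulAction.orbitRel (H × H) G) ⟨(a, b), hab⟩).symm
  have h_fixed (q : H × H) : Fintype.card (MulAction.fixedBy G q) =
      #{y | y * ι q.2 * y⁻¹ = ι q.1} := by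
    rw [Fintype.card_subtype]
    refine congrArg card (filter_congr fun y _ ↦ ?_)
    change ι q.1 * y * (ι q.2)⁻¹ = y ↔ _
    rw [mul_inv_eq_iff_eq_mul, mul_inv_eq_iff_eq_mul, eq_comm]
  have h_count : conjCount ι = ∑ q : H × H, Fintype.card (MulAction.fixedBy G q) := by
    simp only [h_fixed, conjCount, conjMultiplicity, card_filter, Fintype.sum_prod_type]
    exact sum_congr rfl fun _ _ ↦ sum_comm
  rw [h_count, MulAction.sum_card_fixedBy_eq_card_orbits_mul_card_group, Fintype.card_prod, ← sq]
  gcongr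

lemma exists_perm_mem_iff_mem_iff {α : Type*} [Finite α] [DecidableEq α] {A A' B B' : Finset α}
    (hA : #A = #A') (hB : #B = #B') (hAB : #(A ∩ B) = #(A' ∩ B')) :
    ∃ π : Equiv.Perm α, (∀ x, π x ∈ A' ↔ x ∈ A) ∧ ∀ x, π x ∈ B' ↔ x ∈ B := by
  cases nonempty_fintype α
  let color (S T : Finset α) (x : α) : Prop × Prop := (x ∈ S, x ∈ T)
  have h_fiber (k : Prop × Prop) :
      Nonempty ({x // color A B x = k} ≃ {x // color A' B' x = k}) := by
    obtain ⟨p, q⟩ := k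
    have h_card (S T : Finset α) : Fintype.card {x // color S T x = (p, q)} =
        if p then if q then #(S ∩ T) else #S - #(S ∩ T)
        else if q then #T - #(S ∩ T) else Fintype.card α - (#S + #T - #(S ∩ T)) := by
      rw [Fintype.card_subtype, ← card_union, ← card_compl, ← card_sdiff, inter_comm S T,
        ← card_sdiff, inter_comm T S]
      by_cases hp : p <;> by_cases hq : q <;> simp only [color, Prod.mk.injEq, hp, hq, if_true,
        if_false] <;> congr 1 <;> ext x <;> simp [and_comm]
    exact ⟨Fintype.equivOfCardEq (by rw [h_card, h_card, hA, hB, hAB])⟩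
  let π : Equiv.Perm α := Equiv.ofFiberEquiv fun k ↦ (h_fiber k).some
  have hπ (x : α) : color A' B' (π x) = color A B x := Equiv.ofFiberEquiv_map _ x
  exact ⟨π, fun x ↦ (congrArg Prod.fst (hπ x)).to_iff, fun x ↦ (congrArg Prod.snd (hπ x)).to_iff⟩

end DoubleCoset

/-! ### Young subgroups with two blocks -/

section Young

open Equiv

variable {α : Type*} {p : α → Prop} [DecidablePred p]

lemma mem_range_subtypeCongrHom {σ : Perm α} (h : ∀ x, p (σ x) ↔ p x) :
    σ ∈ (Perm.subtypeCongrHom p).range := by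
  refine ⟨(σ.subtypePerm h, σ.subtypePerm fun x ↦ not_congr (h x)), Equiv.ext fun x ↦ ?_⟩
  by_cases hx : p x <;> simp [hx]

variable [Fintype α] [DecidableEq α]

-- The size of the overlap of the block with its preimage determines the double coset.
lemma conjCount_subtypeCongrHom_le :
    conjCount (Perm.subtypeCongrHom p) ≤ (Fintype.card {x // p x} + 1) *
      Fintype.card (Perm {x // p x} × Perm {x // ¬ p x}) ^ 2 := by
  let block (z : Perm α) : Finset α := {x | p (z x)}
  have h_mem (z : Perm α) (x : α) : x ∈ block z ↔ p (z x) := mem_filter_univ _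
  have h_card (z : Perm α) : #(block z) = #(block 1) :=
    card_equiv z fun x ↦ by rw [h_mem, h_mem, Perm.one_apply]
  let overlap (z : Perm α) : Fin (Fintype.card {x // p x} + 1) :=
    ⟨#(block 1 ∩ block z), Nat.lt_succ_of_le <|
      (card_le_card inter_subset_left).trans_eq (Fintype.card_subtype p).symm⟩
  rw [← Fintype.card_fin (Fintype.card {x // p x} + 1)]
  refine conjCount_le_of_doubleCoset_invariant _ overlap fun z w hzw ↦ ?_
  obtain ⟨π, hπ, hπ'⟩ := exists_perm_mem_iff_mem_iff rfl ((h_card z).trans (h_card w).symm)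
    (congrArg Fin.val hzw)
  simp only [h_mem, Perm.one_apply] at hπ hπ'
  obtain ⟨b, hb⟩ := mem_range_subtypeCongrHom hπ
  obtain ⟨a, ha⟩ := mem_range_subtypeCongrHom (p := p) (σ := w * π * z⁻¹) fun x ↦ by
    simpa using hπ' (z⁻¹ x)
  exact ⟨a, b, by rw [ha, hb, inv_mul_cancel_right, mul_inv_cancel_right]⟩

variable (p) in
/-- The inclusion into the symmetric group of the even part of the two-block Young subgroup of
`p`. -/
def evenYoungHom :
    alternatingGroup {x // p x} × alternatingGroup {x // ¬ p x} →* Perm α :=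
  (Perm.subtypeCongrHom p).comp ((alternatingGroup _).subtype.prodMap (alternatingGroup _).subtype)

lemma conjCount_evenYoungHom_le [Nontrivial {x // p x}] [Nontrivial {x // ¬ p x}] :
    conjCount (evenYoungHom p) ≤ 16 * (Fintype.card {x // p x} + 1) *
      Fintype.card (alternatingGroup {x // p x} × alternatingGroup {x // ¬ p x}) ^ 2 := by
  have h_card : Fintype.card (Perm {x // p x} × Perm {x // ¬ p x}) =
      4 * Fintype.card (alternatingGroup {x // p x} × alternatingGroup {x // ¬ p x}) := by
    rw [Fintype.card_prod, Fintype.card_prod, ← two_mul_card_alternatingGroup,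
      ← two_mul_card_alternatingGroup]
    ring
  have h_comp : ⇑(evenYoungHom p) = Perm.subtypeCongrHom p ∘ Prod.map Subtype.val Subtype.val := rfl
  calc conjCount (evenYoungHom p)
    _ ≤ conjCount (Perm.subtypeCongrHom p) := h_comp ▸ conjCount_comp_le _
        (Subtype.val_injective.prodMap Subtype.val_injective)
    _ ≤ _ := conjCount_subtypeCongrHom_le
    _ = _ := by rw [h_card]; ring

end Young

/-! ### The dimension of ideals without alternating invariants -/

section Weight

variable {E : Type*} [NormedAddCommGroup E] [InnerProductSpace ℝ E]

lemma exists_common_eigenvector_of_involutions {ι : Type*} [Finite ι] {T : ι → Module.End ℝ E}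
    (h_comm : ∀ i j, Commute (T i) (T j)) (h_sq : ∀ i, T i * T i = 1) {W : Submodule ℝ E}
    (hTW : ∀ i, ∀ w ∈ W, T i w ∈ W) (hW : W ≠ ⊥) :
    ∃ w ∈ W, w ≠ 0 ∧ ∃ χ : ι → ℝ, ∀ i, T i w = χ i • w := by
  cases nonempty_fintype ι
  suffices h : ∀ s : Finset ι, ∃ w ∈ W, w ≠ 0 ∧ ∀ i ∈ s, ∃ r : ℝ, T i w = r • w by
    obtain ⟨w, hw, hw0, h_eigen⟩ := h univ
    exact ⟨w, hw, hw0, Classical.axiomOfChoice fun i ↦ h_eigen i (mem_univ i)⟩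
  intro s
  induction s using Finset.induction_on with
  | empty => simpa using W.exists_mem_ne_zero_of_ne_bot hW
  | insert j s _ ih =>
    obtain ⟨w, hw, hw0, h_eigen⟩ := ih
    by_cases h : w + T j w = 0
    · refine ⟨w, hw, hw0, forall_mem_insert _ _ _ |>.2 ⟨⟨-1, ?_⟩, h_eigen⟩⟩
      rw [neg_one_smul, eq_neg_of_add_eq_zero_right h]
    · refine ⟨w + T j w, W.add_mem hw (hTW j w hw), h, forall_mem_insert _ _ _ |>.2
        ⟨⟨1, ?_⟩, fun i hi ↦ ?_⟩⟩
      · rw [map_add, ← Module.End.mul_apply, h_sq, Module.End.one_apply, one_smul, add_comm]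
      · obtain ⟨r, hr⟩ := h_eigen i hi
        exact ⟨r, by rw [map_add, ← Module.End.mul_apply, (h_comm i j).eq, Module.End.mul_apply,
          hr, map_smul, smul_add]⟩

lemma exists_common_eigenvector_of_involutions_of_ne {ι : Type*} [Finite ι]
    {T : ι → Module.End ℝ E} (h_comm : ∀ i j, Commute (T i) (T j)) (h_sq : ∀ i, T i * T i = 1)
    {W : Submodule ℝ E} (hTW : ∀ i, ∀ w ∈ W, T i w ∈ W) {i j : ι} {v : E} (hv : v ∈ W)
    (h_ne : (T i * T j) v ≠ v) :
    ∃ w ∈ W, w ≠ 0 ∧ ∃ χ : ι → ℝ, (∀ l, T l w = χ l • w) ∧ χ i ≠ χ j := by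
  set S := T i * T j
  have hS_comm (l : ι) : Commute S (T l) := (h_comm i l).mul_left (h_comm j l)
  have hS_sq : S * S = 1 := by
    rw [mul_assoc, ← mul_assoc (T j), ← (h_comm i j).eq, mul_assoc, h_sq, mul_one, h_sq]
  let V : Submodule ℝ E := W ⊓ Module.End.eigenspace S (-1)
  have h_memV {w : E} : w ∈ V ↔ w ∈ W ∧ S w = -w := by simp [V]
  have hV_ne : V ≠ ⊥ := by
    refine (Submodule.ne_bot_iff V).2 ⟨v - S v, h_memV.2 ⟨W.sub_mem hv ?_, ?_⟩, ?_⟩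
    · exact hTW i _ (hTW j v hv)
    · rw [map_sub, ← Module.End.mul_apply, hS_sq, Module.End.one_apply, neg_sub]
    · exact sub_ne_zero.2 h_ne.symm
  obtain ⟨w, hw, hw0, χ, hχ⟩ := exists_common_eigenvector_of_involutions h_comm h_sq (W := V)
    (fun l w hw ↦ h_memV.2 ⟨hTW l w (h_memV.1 hw).1, by
      rw [← Module.End.mul_apply, (hS_comm l).eq, Module.End.mul_apply, (h_memV.1 hw).2, map_neg]⟩)
    hV_ne
  refine ⟨w, (h_memV.1 hw).1, hw0, χ, hχ, fun h ↦ ?_⟩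
  have h_square : (χ i * χ i + 1) • w = 0 := by
    have h_neg := (h_memV.1 hw).2
    rw [Module.End.mul_apply, hχ j, map_smul, hχ i, ← h, smul_smul] at h_neg
    rw [add_smul, one_smul, h_neg, neg_add_cancel]
  exact hw0 ((smul_eq_zero.1 h_square).resolve_left
    (add_pos_of_nonneg_of_pos (mul_self_nonneg _) one_pos).ne')

lemma exists_card_le_two_mul_card_filter_ne {ι κ : Type*} [Fintype ι] {χ : ι → κ} {i j : ι}
    (h : χ i ≠ χ j) : ∃ k, Fintype.card ι ≤ 2 * #{l | χ l ≠ χ k} := by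
  let differ (k : ι) : Finset ι := {l | χ l ≠ χ k}
  have h_union : univ ⊆ differ i ∪ differ j := by
    intro l _
    simp only [differ, mem_union, mem_filter_univ, ← not_and_or]
    exact fun hl ↦ h (hl.1.symm.trans hl.2)
  have h_card : Fintype.card ι ≤ #(differ i) + #(differ j) :=
    (card_le_card h_union).trans (card_union_le _ _)
  rcases le_total #(differ i) #(differ j) with hle | hle
  · exact ⟨j, h_card.trans (by change _ ≤ 2 * #(differ j); omega)⟩
  · exact ⟨i, h_card.trans (by change _ ≤ 2 * #(differ i); omega)⟩

variable {G : Type*} [Group G] {ρ : G →* (E ≃ₗᵢ[ℝ] E)}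

variable (ρ) in
/-- The vectors on which each `ρ (t i)` acts as the scalar `χ i`. -/
def weightSpace {ι : Type*} (t : ι → G) (χ : ι → ℝ) : Submodule ℝ E :=
  ⨅ i, Module.End.eigenspace (ρ (t i)).toLinearEquiv.toLinearMap (χ i)

lemma mem_weightSpace {ι : Type*} {t : ι → G} {χ : ι → ℝ} {w : E} :
    w ∈ weightSpace ρ t χ ↔ ∀ i, ρ (t i) w = χ i • w := by
  simp [weightSpace]

lemma inner_eq_zero_of_rep_eq_smul {t : G} (ht : t⁻¹ = t) {a b : ℝ} (hab : a ≠ b) {x y : E}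
    (hx : ρ t x = a • x) (hy : ρ t y = b • y) : inner ℝ x y = 0 := by
  have h_inner := inner_rep_left ρ t x y
  rw [ht, hx, hy, inner_smul_left, inner_smul_right, conj_trivial] at h_inner
  exact (mul_eq_mul_right_iff.1 h_inner).resolve_left hab

lemma rep_conj_eq_smul {t y : G} {r : ℝ} {w : E} (h : ρ t w = r • w) :
    ρ (y * t * y⁻¹) (ρ y w) = r • ρ y w := by
  rw [← Function.comp_apply (f := ρ (y * t * y⁻¹)), ← LinearIsometryEquiv.coe_mul, ← map_mul,
    inv_mul_cancel_right, map_mul, LinearIsometryEquiv.coe_mul, Function.comp_apply, h, map_smul]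

/-- The group elements acting as the identity on `W`. -/
def trivialOn (ρ : G →* (E ≃ₗᵢ[ℝ] E)) (W : Submodule ℝ E) : Subgroup G where
  carrier := {g | ∀ w ∈ W, ρ g w = w}
  one_mem' w _ := by simp
  mul_mem' {a b} ha hb w hw := by simp [hb w hw, ha w hw]
  inv_mem' {a} ha w hw := by
    rw [map_inv]
    exact (ρ a).symm_apply_eq.2 (ha w hw).symm

lemma normal_trivialOn {W : Submodule ℝ E} (hW : ∀ a, ∀ w ∈ W, ρ a w ∈ W) :
    (trivialOn ρ W).Normal where
  conj_mem h hh a w hw := by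
    rw [map_mul, map_mul, LinearIsometryEquiv.coe_mul, LinearIsometryEquiv.coe_mul,
      Function.comp_apply, Function.comp_apply, hh _ (hW a⁻¹ w hw), map_inv]
    exact (ρ a).apply_symm_apply w

lemma rightReg_mem_weightSpace_leftReg [Fintype G] {ι : Type*} {t : ι → G} {χ : ι → ℝ}
    {f : EuclideanSpace ℝ G} (hf : f ∈ weightSpace (leftReg G) t χ) (a : G) :
    rightReg G a f ∈ weightSpace (leftReg G) t χ :=
  mem_weightSpace.2 fun i ↦ by
    rw [leftReg_rightReg_comm, mem_weightSpace.1 hf, map_smul]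

lemma leftReg_mem_weightSpace_rightReg [Fintype G] {ι : Type*} {t : ι → G} {χ : ι → ℝ}
    {f : EuclideanSpace ℝ G} (hf : f ∈ weightSpace (rightReg G) t χ) (a : G) :
    leftReg G a f ∈ weightSpace (rightReg G) t χ :=
  mem_weightSpace.2 fun i ↦ by
    rw [← leftReg_rightReg_comm, mem_weightSpace.1 hf, map_smul]

end Weight

section PairSwap

open Equiv

variable {α ι : Type*} [DecidableEq α] (p : ι ⊕ ι ↪ α)

/-- The transposition of the two points of the `i`-th pair. -/
def pairSwap (i : ι) : Perm α := swap (p (.inl i)) (p (.inr i))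

/-- The involution exchanging the `i`-th and the `j`-th pair. -/
def pairExchange (i j : ι) : Perm α :=
  swap (p (.inl i)) (p (.inl j)) * swap (p (.inr i)) (p (.inr j))

lemma pairSwap_inv (i : ι) : (pairSwap p i)⁻¹ = pairSwap p i := swap_inv _ _

lemma pairExchange_conj_self (i j : ι) :
    pairExchange p i j * pairSwap p j * (pairExchange p i j)⁻¹ = pairSwap p i := by
  rw [pairSwap, ← swap_apply_apply, pairSwap]
  simp [pairExchange, swap_apply_def]

lemma pairExchange_conj_of_ne {i j l : ι} (hi : l ≠ i) (hj : l ≠ j) :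
    pairExchange p i j * pairSwap p l * (pairExchange p i j)⁻¹ = pairSwap p l := by
  rw [pairSwap, ← swap_apply_apply]
  simp [pairExchange, swap_apply_def, hi, hj]

lemma commute_pairSwap (i j : ι) : Commute (pairSwap p i) (pairSwap p j) := by
  rcases eq_or_ne i j with rfl | h
  · exact .refl _
  · exact (Perm.disjoint_swap_swap (by simp [h])).commute

lemma pairSwap_injective : Function.Injective (pairSwap p) := by
  intro i j h
  by_contra hij
  have h_apply := Perm.congr_fun h (p (.inl i))
  simp [pairSwap, swap_apply_def, hij] at h_apply

variable {p} in
lemma inner_pairExchange_eq_zero {E : Type*} [NormedAddCommGroup E] [InnerProductSpace ℝ E]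
    {ρ : Perm α →* (E ≃ₗᵢ[ℝ] E)} {χ : ι → ℝ} {w w' : E}
    (hw : w ∈ weightSpace ρ (pairSwap p) χ) (hw' : w' ∈ weightSpace ρ (pairSwap p) χ) {i j k : ι}
    (hi : χ i ≠ χ k) (hij : i ≠ j) :
    inner ℝ (ρ (pairExchange p i k) w) (ρ (pairExchange p j k) w') = 0 := by
  have h_left := rep_conj_eq_smul (y := pairExchange p i k) (mem_weightSpace.1 hw k)
  have h_right := rep_conj_eq_smul (y := pairExchange p j k) (mem_weightSpace.1 hw' i)
  rw [pairExchange_conj_self] at h_left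
  rw [pairExchange_conj_of_ne p hij (ne_of_apply_ne χ hi)] at h_right
  exact inner_eq_zero_of_rep_eq_smul (pairSwap_inv p i) hi.symm h_left h_right

end PairSwap

section Dimension

open Equiv

variable {α ι : Type*} [Fintype α] [DecidableEq α]
variable {E : Type*} [NormedAddCommGroup E] [InnerProductSpace ℝ E] {ρ : Perm α →* (E ≃ₗᵢ[ℝ] E)}

lemma exists_rep_ne_self (hα : 5 ≤ Fintype.card α) {W : Submodule ℝ E}
    (hW : ∀ a, ∀ w ∈ W, ρ a w ∈ W) (hne : W ≠ ⊥)
    (hA : ∀ w ∈ W, subgroupAverage ρ (alternatingGroup α) w = 0) {σ : Perm α} (hσ : σ ≠ 1) :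
    ∃ w ∈ W, ρ σ w ≠ w := by
  by_contra! h_fix
  have := normal_trivialOn hW
  have h_nontrivial : Nontrivial (trivialOn ρ W) :=
    (Subgroup.nontrivial_iff_exists_ne_one _).2 ⟨σ, h_fix, hσ⟩
  have h_le : alternatingGroup α ≤ trivialOn ρ W :=
    Perm.alternatingGroup_le_of_normal (by simpa using hα) h_nontrivial
  obtain ⟨w, hw, hw0⟩ := W.exists_mem_ne_zero_of_ne_bot hne
  exact hw0 ((average_apply_eq_self ρ fun h ↦ h_le h.2 w hw).symm.trans (hA w hw))

lemma exists_weightSpace_ne_bot [Finite ι] [Nontrivial ι] (hα : 5 ≤ Fintype.card α)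
    (p : ι ⊕ ι ↪ α) {W : Submodule ℝ E} (hW : ∀ a, ∀ w ∈ W, ρ a w ∈ W) (hne : W ≠ ⊥)
    (hA : ∀ w ∈ W, subgroupAverage ρ (alternatingGroup α) w = 0) :
    ∃ χ : ι → ℝ, (∃ i j, χ i ≠ χ j) ∧ W ⊓ weightSpace ρ (pairSwap p) χ ≠ ⊥ := by
  obtain ⟨i, j, hij⟩ := exists_pair_ne ι
  let T (l : ι) : Module.End ℝ E := (ρ (pairSwap p l)).toLinearEquiv.toLinearMap
  have h_comm (l m : ι) : Commute (T l) (T m) := LinearMap.ext fun w ↦ by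
    simpa [T] using congrArg (ρ · w) (commute_pairSwap p l m).eq
  have h_sq (l : ι) : T l * T l = 1 := LinearMap.ext fun w ↦ by
    simpa [T] using congrArg (ρ · w) (inv_eq_iff_mul_eq_one.1 (pairSwap_inv p l))
  obtain ⟨v, hv, hv_ne⟩ := exists_rep_ne_self hα hW hne hA (σ := pairSwap p i * pairSwap p j)
    fun h ↦ hij (pairSwap_injective p ((mul_eq_one_iff_eq_inv.1 h).trans (pairSwap_inv p j)))
  obtain ⟨w, hw, hw0, χ, hχ, h_ne⟩ := exists_common_eigenvector_of_involutions_of_ne h_comm h_sq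
    (fun l ↦ hW (pairSwap p l)) (i := i) (j := j) hv (by simpa [T] using hv_ne)
  exact ⟨χ, ⟨i, j, h_ne⟩, (Submodule.ne_bot_iff _).2 ⟨w, ⟨hw, mem_weightSpace.2 hχ⟩, hw0⟩⟩

lemma card_sq_le_four_mul_finrank_of_pairs [Fintype ι] [Nontrivial ι] (hα : 5 ≤ Fintype.card α)
    (p : ι ⊕ ι ↪ α) {W : Submodule ℝ (EuclideanSpace ℝ (Perm α))} (hW : IsIdeal W) (hne : W ≠ ⊥)
    (hA : ∀ f ∈ W, subgroupAverage (leftReg _) (alternatingGroup α) f = 0) :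
    Fintype.card ι ^ 2 ≤ 4 * Module.finrank ℝ W := by
  obtain ⟨χ, ⟨i, j, hij⟩, hχ⟩ := exists_weightSpace_ne_bot hα p hW.left hne hA
  obtain ⟨χ', ⟨i', j', hij'⟩, hχ'⟩ := exists_weightSpace_ne_bot (ρ := rightReg _)
    (W := W ⊓ weightSpace (leftReg _) (pairSwap p) χ) hα p
    (fun a f hf ↦ ⟨hW.right a f hf.1, rightReg_mem_weightSpace_leftReg hf.2 a⟩) hχ
    (fun f hf ↦ by rw [subgroupAverage_rightReg, hA f hf.1])
  obtain ⟨k, hk⟩ := exists_card_le_two_mul_card_filter_ne hij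
  obtain ⟨k', hk'⟩ := exists_card_le_two_mul_card_filter_ne hij'
  obtain ⟨f, ⟨⟨hfW, hf⟩, hf'⟩, hf0⟩ := (Submodule.ne_bot_iff _).1 hχ'
  let v (q : {l // χ l ≠ χ k} × {l // χ' l ≠ χ' k'}) : W :=
    ⟨leftReg _ (pairExchange p q.1 k) (rightReg _ (pairExchange p q.2 k') f),
      hW.left _ _ (hW.right _ _ hfW)⟩
  have hv_ne (q) : v q ≠ 0 := by simpa [v, Subtype.ext_iff] using hf0
  have hv_orthogonal : Pairwise fun q r ↦ inner ℝ (v q) (v r) = 0 := by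
    rintro ⟨a, b⟩ ⟨a', b'⟩ hqr
    by_cases hab : (a : ι) = a'
    · have hbb' : (b : ι) ≠ b' := fun h ↦ hqr (Prod.ext (Subtype.ext hab) (Subtype.ext h))
      simp only [v, Submodule.coe_inner, leftReg_rightReg_comm]
      exact inner_pairExchange_eq_zero (leftReg_mem_weightSpace_rightReg hf' _)
        (leftReg_mem_weightSpace_rightReg hf' _) b.2 hbb'
    · exact inner_pairExchange_eq_zero (rightReg_mem_weightSpace_leftReg hf _)
        (rightReg_mem_weightSpace_leftReg hf _) a.2 hab
  have h_card :=
    (linearIndependent_of_ne_zero_of_inner_eq_zero hv_ne hv_orthogonal).fintype_card_le_finrank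
  rw [Fintype.card_prod, Fintype.card_subtype, Fintype.card_subtype] at h_card
  nlinarith [Nat.mul_le_mul hk hk']

theorem card_sq_div_le_finrank {W : Submodule ℝ (EuclideanSpace ℝ (Perm α))} (hW : IsIdeal W)
    (hne : W ≠ ⊥) (hA : ∀ f ∈ W, subgroupAverage (leftReg _) (alternatingGroup α) f = 0) :
    (Fintype.card α : ℝ) ^ 2 / 64 ≤ Module.finrank ℝ W := by
  suffices h : Fintype.card α ^ 2 ≤ 64 * Module.finrank ℝ W by
    rw [div_le_iff₀' (by norm_num)]
    exact_mod_cast h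
  rcases lt_or_ge (Fintype.card α) 8 with h_small | h_large
  · have h_pos : 0 < Module.finrank ℝ W :=
      Module.finrank_pos_iff.2 (Submodule.nontrivial_iff_ne_bot.2 hne)
    nlinarith
  · obtain ⟨k, hk⟩ : ∃ k, k = Fintype.card α / 2 := ⟨_, rfl⟩
    have : Nontrivial (Fin k) := Fin.nontrivial_iff_two_le.2 (by omega)
    obtain ⟨p⟩ : Nonempty (Fin k ⊕ Fin k ↪ α) :=
      Function.Embedding.nonempty_of_card_le (by simp; omega)
    have h_dim := card_sq_le_four_mul_finrank_of_pairs (by omega) p hW hne hA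
    rw [Fintype.card_fin] at h_dim
    have h_card : Fintype.card α ≤ 4 * k := by omega
    nlinarith

end Dimension

/-! ### Class averages of a product of groups -/

section Product

variable {E : Type*} [NormedAddCommGroup E] [InnerProductSpace ℝ E]
variable {H K : Type*} [Group H] [Group K] (ρ : H × K →* (E ≃ₗᵢ[ℝ] E))
variable {κ κ' : Type*} [Fintype κ] [Fintype κ'] (c : κ → H) (c' : κ' → K)

lemma average_inl_mul_average_inr :
    average (ρ.comp (.inl H K)) c * average (ρ.comp (.inr H K)) c' =
      average ρ (Prod.map c c') := by
  have h_mul (a : H) (b : K) (x : E) : ρ (a, 1) (ρ (1, b) x) = ρ (a, b) x := by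
    rw [← Function.comp_apply (f := ρ (a, 1)), ← LinearIsometryEquiv.coe_mul, ← map_mul]
    simp
  ext x
  simp only [Module.End.mul_apply, average_apply, map_smul, map_sum, MonoidHom.comp_apply,
    MonoidHom.inl_apply, MonoidHom.inr_apply, h_mul, Fintype.card_prod, Nat.cast_mul,
    mul_inv, Fintype.sum_prod_type, Prod.map_apply]
  rw [← smul_sum, smul_smul, mul_comm, sum_comm]

lemma commute_average_inl_average_inr :
    Commute (average (ρ.comp (.inl H K)) c) (average (ρ.comp (.inr H K)) c') := by
  refine commute_average fun l x ↦ ?_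
  refine (map_average (ρ := ρ.comp (.inl H K)) (c := c) (c' := c)
    (Φ := (ρ (1, c' l)).toLinearEquiv.toLinearMap) (fun k x ↦ ?_) x).symm
  have h_comm : ρ (1, c' l) * ρ (c k, 1) = ρ (c k, 1) * ρ (1, c' l) := by
    simp [← map_mul]
  exact DFunLike.congr_fun h_comm x

variable [Fintype H] [Fintype K]

lemma abs_inner_classAverage_prod_le (N : Subgroup H) (M : Subgroup K) [Fintype N] [Fintype M]
    {g : H} {h : K} {ε : ℝ} (hε : 0 ≤ ε)
    (hg : ∀ z, subgroupAverage (ρ.comp (.inl H K)) N z = 0 →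
      ‖classAverage (ρ.comp (.inl H K)) g z‖ ≤ ε * ‖z‖)
    (hh : ∀ z, subgroupAverage (ρ.comp (.inr H K)) M z = 0 →
      ‖classAverage (ρ.comp (.inr H K)) h z‖ ≤ ε * ‖z‖) (x : E) :
    |inner ℝ x (classAverage ρ (g, h) x)| ≤
      ε * ‖x‖ ^ 2 + inner ℝ x (average ρ (Prod.map ((↑) : N → H) ((↑) : M → K)) x) := by
  rw [← average_inl_mul_average_inr]
  have h_class : classAverage ρ (g, h) =
      classAverage (ρ.comp (.inl H K)) g * classAverage (ρ.comp (.inr H K)) h :=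
    (average_inl_mul_average_inr ρ (fun y ↦ y * g * y⁻¹) fun y ↦ y * h * y⁻¹).symm
  rw [h_class]
  exact abs_inner_mul_apply_le_of_symmetricProjection
    (symmetricProjection_subgroupAverage _ N) (symmetricProjection_subgroupAverage _ M)
    (commute_average_inl_average_inr ρ _ _) (commute_average_inl_average_inr ρ _ _)
    (commute_classAverage_subgroupAverage _ g N) (commute_average_inl_average_inr ρ _ _)
    (commute_average_inl_average_inr ρ _ _).symm (commute_classAverage_subgroupAverage _ h M)
    (norm_average_le _ _) (norm_average_le _ _) hε hg hh x

lemma inner_classAverage_comp {G : Type*} [Group G] [Fintype G] (ι : H →* G)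
    {f : EuclideanSpace ℝ G} (hf : IsClassFunction f) (g : H) :
    inner ℝ f (classAverage ((leftReg G).comp ι) g f) = inner ℝ f (leftReg G (ι g) f) := by
  have h_term (y : H) : inner ℝ f ((leftReg G).comp ι (y * g * y⁻¹) f) =
      inner ℝ f (leftReg G (ι g) f) := by
    rw [MonoidHom.comp_apply, map_mul ι, map_mul ι, map_inv, inner_leftReg_conj hf]
  simp only [classAverage, average_apply, inner_smul_right, inner_sum, h_term]
  simp

end Product

/-! ### Spectral gaps of conjugacy classes of permutations -/

section PermGap

open Equiv

lemma isConj_inv_perm {α : Type*} [Finite α] (g : Perm α) : IsConj g g⁻¹ := by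
  classical
  cases nonempty_fintype α
  exact Perm.isConj_iff_cycleType_eq.2 (Perm.cycleType_inv g).symm

variable {α : Type*} [Fintype α] [DecidableEq α]

-- The centralizer of a full cycle acts freely.
lemma conjCount_const_le {g : Perm α} {x₀ : α} (hg : ∀ y, g.SameCycle x₀ y) :
    conjCount (fun _ : Unit ↦ g) ≤ Fintype.card α := by
  have h_inj : Set.InjOn (fun t : Perm α × Unit ↦ t.1 x₀)
      ({t : Perm α × Unit | t.1 * g * t.1⁻¹ = g} : Finset _) := by
    rintro ⟨y, _⟩ hy ⟨z, _⟩ hz hyz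
    simp only [coe_filter_univ, Set.mem_ofPred_eq, mul_inv_eq_iff_eq_mul] at hy hz
    refine Prod.ext (Equiv.ext fun u ↦ ?_) rfl
    obtain ⟨i, rfl⟩ := hg u
    have h_comm {w : Perm α} (hw : w * g = g * w) : w ((g ^ i) x₀) = (g ^ i) (w x₀) :=
      DFunLike.congr_fun (Commute.zpow_right hw i).eq x₀
    exact (h_comm hy).trans <| (congrArg _ hyz).trans (h_comm hz).symm
  simpa [conjCount, conjMultiplicity] using card_le_card_of_injOn _ (fun _ _ ↦ mem_univ _) h_inj

variable [Nontrivial α]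

lemma ClassGap.of_sameCycle {g : Perm α} {x₀ : α} (hg : ∀ y, g.SameCycle x₀ y) :
    ClassGap (alternatingGroup α) g (8 / √(Fintype.card α)) := by
  have : (0 : ℝ) < Fintype.card α := by exact_mod_cast Fintype.card_pos
  refine .of_idealKernel (isConj_inv_perm g) (by positivity) fun W hW hne hA ↦ ?_
  have h_kernel := abs_expect_idealKernel_le (fun _ : Unit ↦ g) hW hne (r := Fintype.card α)
    (by positivity) (card_sq_div_le_finrank hW hne hA) (by simpa using conjCount_const_le hg)
  have h_sqrt : √(Fintype.card α / ((Fintype.card α : ℝ) ^ 2 / 64)) = 8 / √(Fintype.card α) := by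
    rw [show (Fintype.card α : ℝ) / ((Fintype.card α : ℝ) ^ 2 / 64) = 8 ^ 2 / Fintype.card α by
      field_simp; norm_num, Real.sqrt_div (by norm_num), Real.sqrt_sq (by norm_num)]
  simpa [h_sqrt] using h_kernel

lemma expect_idealKernel_evenYoungHom_le {p : α → Prop} [DecidablePred p] [Nontrivial {x // p x}]
    [Nontrivial {x // ¬ p x}] {W : Submodule ℝ (EuclideanSpace ℝ (Perm α))} (hW : IsIdeal W)
    (hne : W ≠ ⊥) (hA : ∀ f ∈ W, subgroupAverage (leftReg _) (alternatingGroup α) f = 0) :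
    𝔼 k, idealKernel W (evenYoungHom p k) ≤
      32 * √(Fintype.card {x // p x} + 1) / Fintype.card α * idealKernel W 1 := by
  have : (0 : ℝ) < Fintype.card α := by exact_mod_cast Fintype.card_pos
  have h_kernel := abs_expect_idealKernel_le (evenYoungHom p) hW hne
    (r := 16 * (Fintype.card {x // p x} + 1)) (by positivity) (card_sq_div_le_finrank hW hne hA)
    (by exact_mod_cast conjCount_evenYoungHom_le)
  have h_ratio : (16 * (Fintype.card {x // p x} + 1) / ((Fintype.card α : ℝ) ^ 2 / 64) : ℝ) =
      (32 / Fintype.card α) ^ 2 * (Fintype.card {x // p x} + 1) := by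
    field_simp
    norm_num
  rw [h_ratio, Real.sqrt_mul (by positivity), Real.sqrt_sq (by positivity)] at h_kernel
  rw [mul_div_right_comm]
  exact (le_abs_self _).trans h_kernel

lemma ClassGap.subtypeCongrHom {p : α → Prop} [DecidablePred p] [Nontrivial {x // p x}]
    [Nontrivial {x // ¬ p x}] {g : Perm {x // p x}} {h : Perm {x // ¬ p x}} {ε : ℝ} (hε : 0 ≤ ε)
    (hg : ClassGap (alternatingGroup _) g ε) (hh : ClassGap (alternatingGroup _) h ε) :
    ClassGap (alternatingGroup α) (Perm.subtypeCongrHom p (g, h))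
      (ε + 32 * √(Fintype.card {x // p x} + 1) / Fintype.card α) := by
  refine .of_idealKernel (isConj_inv_perm _) (by positivity) fun W hW hne hA ↦ ?_
  set ι := Perm.subtypeCongrHom p
  have h_inner := abs_inner_classAverage_prod_le ((leftReg (Perm α)).comp ι) (alternatingGroup _)
    (alternatingGroup _) hε (fun _ ↦ hg.norm_classAverage_comp_le hε (ι.comp (.inl _ _)))
    (fun _ ↦ hh.norm_classAverage_comp_le hε (ι.comp (.inr _ _))) (idealKernel W)
  have h_average : average ((leftReg (Perm α)).comp ι) (Prod.map Subtype.val Subtype.val) =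
    average (leftReg (Perm α)) (evenYoungHom p) := rfl
  rw [inner_classAverage_comp _ (isClassFunction_idealKernel hW),
    inner_leftReg_idealKernel hW (idealKernel_mem W), h_average,
    inner_idealKernel_average _ hW, ← idealKernel_one] at h_inner
  linarith [expect_idealKernel_evenYoungHom_le (p := p) hW hne hA]

lemma ClassGap.of_subtypePerm {p : α → Prop} [DecidablePred p] [Nontrivial {x // p x}]
    [Nontrivial {x // ¬ p x}] {g : Perm α} (h : ∀ x, p (g x) ↔ p x) {ε : ℝ} (hε : 0 ≤ ε)
    (h_pos : ClassGap (alternatingGroup _) (g.subtypePerm h) ε)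
    (h_neg : ClassGap (alternatingGroup {x // ¬ p x}) (g.subtypePerm fun x ↦ not_congr (h x)) ε) :
    ClassGap (alternatingGroup α) g (ε + 32 * √(Fintype.card {x // p x} + 1) / Fintype.card α) := by
  have h_glue : Perm.subtypeCongrHom p (g.subtypePerm h, g.subtypePerm fun x ↦ not_congr (h x)) =
      g := by
    ext x
    by_cases hx : p x <;> simp [hx]
  exact h_glue ▸ ClassGap.subtypeCongrHom hε h_pos h_neg

end PermGap

/-! ### Rotations -/

section Periodic

open Equiv Function

lemma card_sameCycle {α : Type*} [Fintype α] [DecidableEq α] (g : Perm α) (x : α) :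
    Fintype.card {y // g.SameCycle x y} = minimalPeriod g x := by
  have h_orbit (y : α) : y ∈ MulAction.orbit (Subgroup.zpowers g) x ↔ g.SameCycle x y := by
    simp [MulAction.mem_orbit_iff, Subgroup.smul_def, Perm.SameCycle]
  exact (Fintype.card_congr (Equiv.subtypeEquivRight fun y ↦ (h_orbit y).symm)).trans
    (MulAction.minimalPeriod_eq_card (a := g) (b := x)).symm

lemma sameCycle_of_minimalPeriod_eq_card {α : Type*} [Fintype α] {g : Perm α} {x : α}
    (h : minimalPeriod g x = Fintype.card α) (y : α) : g.SameCycle x y := by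
  classical
  by_contra hy
  exact (Fintype.card_subtype_lt hy).ne ((card_sameCycle g x).trans h)

lemma minimalPeriod_subtypePerm {α : Type*} {p : α → Prop} (g : Perm α) (h : ∀ x, p (g x) ↔ p x)
    (x : {x // p x}) : minimalPeriod (g.subtypePerm h) x = minimalPeriod g x :=
  minimalPeriod_eq_minimalPeriod_iff.2 fun i ↦ by
    rw [IsPeriodicPt, IsPeriodicPt, IsFixedPt, IsFixedPt, ← Perm.coe_pow, ← Perm.coe_pow,
      Perm.subtypePerm_pow, Subtype.ext_iff, Perm.subtypePerm_apply]

lemma sqrt_gap_step {m : ℕ} (hm : 2 ≤ m) (k : ℕ) :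
    32 * √(m + 1) / ((k + 1) * m) ≤ 46 / √m * (k + 1 : ℝ)⁻¹ := by
  have hm' : (2 : ℝ) ≤ m := by exact_mod_cast hm
  have h_sqrt : √(m + 1) ≤ 46 / 32 * √m := by
    rw [Real.sqrt_le_left (by positivity), mul_pow, Real.sq_sqrt (by positivity)]
    linarith
  calc 32 * √(m + 1) / ((k + 1) * m)
    _ ≤ 32 * (46 / 32 * √m) / ((k + 1) * m) := by gcongr
    _ = 46 * (√m / m) * (k + 1 : ℝ)⁻¹ := by field_simp
    _ = _ := by rw [Real.sqrt_div_self']; ring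

-- Splitting off one cycle at a time costs `46 / (i √m)` at the `i`-th step.
theorem ClassGap.of_minimalPeriod {m : ℕ} (hm : 2 ≤ m) (k : ℕ) {α : Type*} [Fintype α]
    [DecidableEq α] {g : Perm α} (hg : ∀ x, minimalPeriod g x = m)
    (h_card : Fintype.card α = (k + 1) * m) :
    ClassGap (alternatingGroup α) g (46 / √m * harmonic (k + 1)) := by
  have h_leaf : (8 : ℝ) / √m ≤ 46 / √m := by gcongr; norm_num
  induction k generalizing α with
  | zero =>
    have : Nontrivial α := Fintype.one_lt_card_iff_nontrivial.1 (by lia)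
    obtain ⟨x₀⟩ : Nonempty α := inferInstance
    have h_cycle : minimalPeriod g x₀ = Fintype.card α := by rw [hg, h_card, zero_add, one_mul]
    refine (ClassGap.of_sameCycle (sameCycle_of_minimalPeriod_eq_card h_cycle)).mono ?_
    simpa [h_card, harmonic] using h_leaf
  | succ k ih =>
    obtain ⟨x₀⟩ : Nonempty α := Fintype.card_pos_iff.1 (by rw [h_card]; positivity)
    have h_stable (x : α) : g.SameCycle x₀ (g x) ↔ g.SameCycle x₀ x := Perm.sameCycle_apply_right
    have h_cycle : Fintype.card {y // g.SameCycle x₀ y} = m := (card_sameCycle g x₀).trans (hg x₀)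
    have h_rest : Fintype.card {y // ¬ g.SameCycle x₀ y} = (k + 1) * m := by
      rw [Fintype.card_subtype_compl, h_cycle, h_card, Nat.sub_eq_iff_eq_add] <;> lia
    have : Nontrivial α := Fintype.one_lt_card_iff_nontrivial.1 (by nlinarith)
    have : Nontrivial {y // g.SameCycle x₀ y} := Fintype.one_lt_card_iff_nontrivial.1 (by lia)
    have : Nontrivial {y // ¬ g.SameCycle x₀ y} :=
      Fintype.one_lt_card_iff_nontrivial.1 (by nlinarith)
    have h_harmonic : (1 : ℝ) ≤ harmonic (k + 1) := by
      have : 1 ≤ harmonic (k + 1) := by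
        simpa [harmonic, sum_range_succ'] using sum_nonneg fun _ _ ↦ by positivity
      exact_mod_cast this
    have h_gap₁ : ClassGap (alternatingGroup _) (g.subtypePerm h_stable)
        (46 / √m * harmonic (k + 1)) := by
      refine (ClassGap.of_sameCycle (x₀ := ⟨x₀, .refl g x₀⟩) fun y ↦ ?_).mono ?_
      · exact Perm.sameCycle_subtypePerm.2 y.2
      · rw [h_cycle]
        exact h_leaf.trans (le_mul_of_one_le_right (by positivity) h_harmonic)
    have h_gap₂ := ih (g := g.subtypePerm fun x ↦ not_congr (h_stable x))
      (fun x ↦ (minimalPeriod_subtypePerm g _ x).trans (hg x)) h_rest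
    have h_gap := ClassGap.of_subtypePerm h_stable (by positivity) h_gap₁ h_gap₂
    rw [h_cycle, h_card] at h_gap
    refine h_gap.mono ?_
    rw [harmonic_succ (k + 1)]
    push_cast
    rw [mul_add]
    gcongr
    exact_mod_cast sqrt_gap_step hm (k + 1)

lemma minimalPeriod_addRight {A : Type*} [AddGroup A] (t x : A) :
    minimalPeriod (Equiv.addRight t) x = addOrderOf t := by
  refine Nat.dvd_right_iff_eq.1 fun i ↦ ?_
  rw [← isPeriodicPt_iff_minimalPeriod_dvd, addOrderOf_dvd_iff_nsmul_eq_zero, IsPeriodicPt,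
    IsFixedPt, Equiv.coe_addRight, add_right_iterate, add_eq_left]

theorem ClassGap.addRight {A : Type*} [AddGroup A] [Fintype A] [DecidableEq A] {t : A}
    (ht : t ≠ 0) : ClassGap (alternatingGroup A) (Equiv.addRight t)
      (46 / √(addOrderOf t) * (1 + Real.log (Fintype.card A))) := by
  obtain ⟨k, hk⟩ := addOrderOf_dvd_card (x := t)
  have h_order : 2 ≤ addOrderOf t :=
    (Nat.two_le_iff _).2 ⟨(addOrderOf_pos t).ne', mt AddMonoid.addOrderOf_eq_one_iff.1 ht⟩
  have hk₀ : k ≠ 0 := right_ne_zero_of_mul (hk ▸ Fintype.card_ne_zero)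
  obtain ⟨k, rfl⟩ := Nat.exists_eq_succ_of_ne_zero hk₀
  refine (ClassGap.of_minimalPeriod h_order k (minimalPeriod_addRight t)
    (hk.trans (mul_comm _ _))).mono ?_
  gcongr
  refine (harmonic_le_one_add_log _).trans ?_
  gcongr
  exact hk ▸ Nat.le_mul_of_pos_left _ (addOrderOf_pos t)

lemma val_nsmul_fin {n : ℕ} [NeZero n] (i : ℕ) (t : Fin n) : (i • t).val = i * t % n := by
  induction i with
  | zero => simp
  | succ i ih => rw [succ_nsmul, Fin.val_add, ih, Nat.mod_add_mod, Nat.succ_mul]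

lemma le_addOrderOf_mul {n : ℕ} [NeZero n] {t : Fin n} (ht : t ≠ 0) : n ≤ addOrderOf t * t := by
  have h_dvd : n ∣ addOrderOf t * t := Nat.dvd_of_mod_eq_zero <| by
    rw [← val_nsmul_fin, addOrderOf_nsmul_eq_zero, Fin.val_zero]
  exact Nat.le_of_dvd (Nat.mul_pos (addOrderOf_pos t) (Fin.pos_iff_ne_zero.2 ht)) h_dvd

lemma le_addOrderOf_sub_mul {n M : ℕ} [NeZero n] {x y : Fin n} (hxy : x ≠ y) (hx : (x : ℕ) < M)
    (hy : (y : ℕ) < M) : n ≤ addOrderOf (x - y) * M := by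
  wlog h_lt : y < x generalizing x y
  · rw [← neg_sub, addOrderOf_neg]
    exact this hxy.symm hy hx (lt_of_le_of_ne (not_lt.1 h_lt) hxy)
  refine (le_addOrderOf_mul (sub_ne_zero.2 hxy)).trans (Nat.mul_le_mul_left _ ?_)
  rw [Fin.sub_val_of_le h_lt.le]
  lia

end Periodic

/-! ### Increasing subsequences of random permutations -/

section LIS

open Equiv
open scoped Nat

variable {n : ℕ}

lemma card_le_lisLen {σ : Perm (Fin n)} {s : Finset (Fin n)} (hs : StrictMonoOn σ s) :
    #s ≤ lisLen σ := by
  have h_sup := le_sup (f := fun s : Finset (Fin n) ↦ if StrictMonoOn σ s then #s else 0)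
    (mem_univ s)
  rwa [if_pos hs] at h_sup

lemma exists_strictMonoOn_card_eq_lisLen (σ : Perm (Fin n)) :
    ∃ s : Finset (Fin n), StrictMonoOn σ s ∧ #s = lisLen σ := by
  obtain ⟨s, -, hs⟩ := exists_mem_eq_sup univ univ_nonempty
    fun s : Finset (Fin n) ↦ if StrictMonoOn σ s then #s else 0
  by_cases h_mono : StrictMonoOn σ s
  · exact ⟨s, h_mono, (if_pos h_mono).symm.trans hs.symm⟩
  · exact ⟨∅, by simp [StrictMonoOn], (if_neg h_mono).symm.trans hs.symm⟩

lemma lisLen_le (σ : Perm (Fin n)) : lisLen σ ≤ n := by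
  obtain ⟨s, -, hs⟩ := exists_strictMonoOn_card_eq_lisLen σ
  exact hs ▸ card_finset_fin_le s

/-- The length of the longest increasing subsequence of `σ` none of whose values lie in `X`. -/
noncomputable def lisLenAvoiding (X : Finset (Fin n)) (σ : Perm (Fin n)) : ℕ :=
  ({s | StrictMonoOn σ s ∧ ∀ i ∈ s, σ i ∉ X} : Finset (Finset (Fin n))).sup card

lemma card_le_lisLenAvoiding {X s : Finset (Fin n)} {σ : Perm (Fin n)} (hs : StrictMonoOn σ s)
    (hX : ∀ i ∈ s, σ i ∉ X) : #s ≤ lisLenAvoiding X σ :=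
  le_sup (f := card) ((mem_filter_univ _).2 ⟨hs, hX⟩)

lemma lisLenAvoiding_le_lisLen (X : Finset (Fin n)) (σ : Perm (Fin n)) :
    lisLenAvoiding X σ ≤ lisLen σ :=
  Finset.sup_le fun _ hs ↦ card_le_lisLen ((mem_filter_univ _).1 hs).1

lemma lisLenAvoiding_image_mul {X : Finset (Fin n)} {g : Perm (Fin n)}
    (hg : StrictMonoOn g (X : Set (Fin n))ᶜ) (σ : Perm (Fin n)) :
    lisLenAvoiding (X.image g) (g * σ) = lisLenAvoiding X σ := by
  refine congrArg (Finset.sup · card) (filter_congr fun s _ ↦ ?_)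
  have h_avoid : (∀ i ∈ s, (g * σ) i ∉ X.image g) ↔ ∀ i ∈ s, σ i ∉ X := by simp
  rw [h_avoid]
  refine and_congr_left fun hX ↦ ⟨fun h i hi j hj hij ↦ ?_, fun h i hi j hj hij ↦ ?_⟩
  · exact (hg.lt_iff_lt (hX i hi) (hX j hj)).1 (h hi hj hij)
  · exact hg (hX i hi) (hX j hj) (h hi hj hij)

lemma exists_strictMonoOn_compl_image_eq {X Y : Finset (Fin n)} (h : #X = #Y) :
    ∃ g : Perm (Fin n), StrictMonoOn g (X : Set (Fin n))ᶜ ∧ X.image g = Y := by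
  have h_compl : Fintype.card {x // x ∉ X} = Fintype.card {x // x ∉ Y} := by
    simp [Fintype.card_subtype_compl, h]
  let e : {x // x ∈ X} ≃ {x // x ∈ Y} := Finset.equivOfCardEq h
  let e' : {x // x ∉ X} ≃o {x // x ∉ Y} :=
    (Fintype.orderIsoFinOfCardEq _ h_compl).symm.trans (Fintype.orderIsoFinOfCardEq _ rfl)
  refine ⟨Equiv.subtypeCongr e e'.toEquiv, fun i hi j hj hij ↦ ?_, ?_⟩
  · have hi' : i ∉ X := by simpa using hi
    have hj' : j ∉ X := by simpa using hj
    have h_lt : e' ⟨i, hi'⟩ < e' ⟨j, hj'⟩ := e'.strictMono hij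
    simpa [Equiv.subtypeCongr, Equiv.sumCompl_symm_apply_of_neg hi',
      Equiv.sumCompl_symm_apply_of_neg hj'] using h_lt
  · refine eq_of_subset_of_card_le (image_subset_iff.2 fun x hx ↦ ?_)
      (by rw [card_image_of_injective _ (Equiv.injective _), h])
    simp [Equiv.subtypeCongr, Equiv.sumCompl_symm_apply_of_pos hx]

lemma expect_lisLenAvoiding_eq_of_card_eq {X Y : Finset (Fin n)} (h : #X = #Y) :
    𝔼 σ, (lisLenAvoiding X σ : ℝ) = 𝔼 σ, (lisLenAvoiding Y σ : ℝ) := by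
  obtain ⟨g, hg, rfl⟩ := exists_strictMonoOn_compl_image_eq h
  exact Fintype.expect_equiv (Equiv.mulLeft g) _ _ fun σ ↦
    congrArg Nat.cast (lisLenAvoiding_image_mul hg σ).symm

lemma eq_one_of_strictMono {α : Type*} [LinearOrder α] [Finite α] {τ : Perm α}
    (hτ : StrictMono τ) : τ = 1 := by
  have h_iso : hτ.orderIsoOfSurjective τ τ.surjective = OrderIso.refl α := Subsingleton.elim _ _
  exact Equiv.ext fun x ↦ DFunLike.congr_fun h_iso x

-- Rearranging the entries at the positions `s` turns each such `σ` into `(#s)!` permutations.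
lemma card_strictMonoOn_mul_factorial_le (s : Finset (Fin n)) :
    #{σ : Perm (Fin n) | StrictMonoOn σ s} * (#s)! ≤ n ! := by
  have h_inj : Set.InjOn (fun q : Perm (Fin n) × Perm s ↦ q.1 * Perm.ofSubtype q.2)
      (({σ | StrictMonoOn σ s} : Finset (Perm (Fin n))) ×ˢ univ :
        Finset (Perm (Fin n) × Perm s)) := by
    rintro ⟨σ, ρ⟩ hσ ⟨σ', ρ'⟩ hσ' (h : σ * Perm.ofSubtype ρ = σ' * Perm.ofSubtype ρ')
    replace hσ : StrictMonoOn σ s := by simpa using hσ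
    replace hσ' : StrictMonoOn σ' s := by simpa using hσ'
    have h_eq : σ = σ' * Perm.ofSubtype (ρ' * ρ⁻¹) := by
      rw [map_mul, map_inv, ← mul_assoc, ← h, mul_inv_cancel_right]
    have h_mono : StrictMono (ρ' * ρ⁻¹ : Perm s) := fun i j hij ↦ by
      have h_lt := hσ i.2 j.2 hij
      simp only [h_eq, Perm.mul_apply, Perm.ofSubtype_apply_coe] at h_lt
      exact (hσ'.lt_iff_lt (Subtype.coe_prop _) (Subtype.coe_prop _)).1 h_lt
    have h_one := eq_one_of_strictMono h_mono
    exact Prod.ext (by simpa [h_one] using h_eq) (mul_inv_eq_one.1 h_one).symm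
  have h_card := card_le_card_of_injOn (t := univ) _ (fun _ _ ↦ mem_univ _) h_inj
  simpa [Fintype.card_perm] using h_card

lemma card_le_lisLen_mul_factorial_le (t : ℕ) :
    #{σ : Perm (Fin n) | t ≤ lisLen σ} * t ! ≤ n.choose t * n ! := by
  have h_cover : ({σ | t ≤ lisLen σ} : Finset (Perm (Fin n))) ⊆
      (powersetCard t univ).biUnion fun s : Finset (Fin n) ↦
        {σ : Perm (Fin n) | StrictMonoOn σ s} := by
    intro σ hσ
    obtain ⟨T, hT, h_card⟩ := exists_strictMonoOn_card_eq_lisLen σ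
    obtain ⟨s, hs, hs_card⟩ := exists_subset_card_eq
      (((mem_filter_univ _).1 hσ).trans_eq h_card.symm)
    exact mem_biUnion.2 ⟨s, mem_powersetCard_univ.2 hs_card,
      (mem_filter_univ _).2 (hT.mono (coe_subset.2 hs))⟩
  calc #{σ : Perm (Fin n) | t ≤ lisLen σ} * t !
      ≤ (∑ s ∈ powersetCard t (univ : Finset (Fin n)), #{σ : Perm (Fin n) | StrictMonoOn σ s}) *
          t ! := Nat.mul_le_mul_right _ ((card_le_card h_cover).trans card_biUnion_le)
    _ = ∑ s ∈ powersetCard t (univ : Finset (Fin n)),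
          #{σ : Perm (Fin n) | StrictMonoOn σ s} * t ! := sum_mul ..
    _ ≤ ∑ _ ∈ powersetCard t (univ : Finset (Fin n)), n ! := sum_le_sum fun _ hs ↦
        mem_powersetCard_univ.1 hs ▸ card_strictMonoOn_mul_factorial_le _
    _ = n.choose t * n ! := by simp

lemma pow_self_le_three_pow_mul_factorial (t : ℕ) : (t : ℝ) ^ t ≤ 3 ^ t * t ! := by
  rw [← div_le_iff₀ (by positivity)]
  calc (t : ℝ) ^ t / t ! ≤ Real.exp t := Real.pow_div_factorial_le_exp _ t.cast_nonneg t
    _ = Real.exp 1 ^ t := by rw [← Real.exp_nat_mul, mul_one]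
    _ ≤ 3 ^ t := by gcongr; exact Real.exp_one_lt_three.le

lemma mul_choose_le_factorial {r : ℕ} (hr : n ≤ r ^ 2) :
    (n : ℝ) * n.choose (9 * r) ≤ (9 * r)! := by
  set t := 9 * r with ht
  have h_n : (n : ℝ) ≤ r ^ 2 := by exact_mod_cast hr
  have h_n_pow : (n : ℝ) ≤ 9 ^ t := by
    have h_r : r ≤ 3 ^ t := (by lia : r ≤ t).trans (Nat.lt_pow_self (by simp)).le
    calc (n : ℝ) ≤ r ^ 2 := h_n
      _ ≤ (3 ^ t) ^ 2 := by gcongr; exact_mod_cast h_r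
      _ = 9 ^ t := by rw [pow_right_comm]; norm_num
  have h_factorial : (3 * r : ℝ) ^ t ≤ t ! := by
    have h_pow := pow_self_le_three_pow_mul_factorial t
    rw [show (t : ℝ) = 3 * (3 * r) by rw [ht]; push_cast; ring, mul_pow 3 (3 * r : ℝ)] at h_pow
    exact le_of_mul_le_mul_left h_pow (by positivity)
  calc (n : ℝ) * n.choose t ≤ 9 ^ t * ((r ^ 2) ^ t / t !) := by
        gcongr
        exact (Nat.choose_le_pow_div t n).trans (by gcongr)
    _ = ((3 * r) ^ t) ^ 2 / t ! := by rw [← mul_div_assoc, ← mul_pow, ← pow_right_comm]; ring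
    _ ≤ (t !) ^ 2 / t ! := by gcongr
    _ = t ! := by rw [sq, mul_self_div_self]

lemma expect_lisLen_le (hn : 0 < n) : 𝔼 σ : Perm (Fin n), (lisLen σ : ℝ) ≤ 19 * √n := by
  obtain ⟨r, hnr, hr⟩ : ∃ r : ℕ, n ≤ r ^ 2 ∧ (r : ℝ) ≤ √n + 1 :=
    ⟨n.sqrt + 1, (sq (n.sqrt + 1)).symm ▸ n.lt_succ_sqrt.le, by
      push_cast; linarith [Real.nat_sqrt_le_real_sqrt (a := n)]⟩
  have h_tail : (n : ℝ) * #{σ : Perm (Fin n) | 9 * r ≤ lisLen σ} ≤ n ! := by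
    have h_count : (#{σ : Perm (Fin n) | 9 * r ≤ lisLen σ} : ℝ) * (9 * r)! ≤
        n.choose (9 * r) * n ! := mod_cast card_le_lisLen_mul_factorial_le (9 * r)
    refine le_of_mul_le_mul_right ?_ (by positivity : (0 : ℝ) < (9 * r)!)
    calc _ ≤ (n : ℝ) * (n.choose (9 * r) * n !) := by rw [mul_assoc]; gcongr
      _ ≤ n ! * (9 * r)! := by
        rw [← mul_assoc, mul_comm (n ! : ℝ)]; gcongr; exact mul_choose_le_factorial hnr
  have h_pointwise (σ : Perm (Fin n)) :
      (lisLen σ : ℝ) ≤ 9 * r + n * (if 9 * r ≤ lisLen σ then 1 else 0) := by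
    have h_le : (lisLen σ : ℝ) ≤ n := mod_cast lisLen_le σ
    split_ifs with h
    · linarith [r.cast_nonneg (α := ℝ)]
    · have h_lt : (lisLen σ : ℝ) < 9 * r := mod_cast not_le.1 h
      linarith
  have h_sqrt : 1 ≤ √(n : ℝ) := Real.one_le_sqrt.2 (mod_cast hn)
  calc _ ≤ 𝔼 σ : Perm (Fin n), ((9 * r : ℝ) + n * (if 9 * r ≤ lisLen σ then 1 else 0)) :=
        expect_le_expect fun σ _ ↦ h_pointwise σ
    _ = 9 * r + n * #{σ : Perm (Fin n) | 9 * r ≤ lisLen σ} / n ! := by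
        rw [expect_add_distrib, Fintype.expect_const, ← mul_expect, Fintype.expect_eq_sum_div_card,
          sum_boole, Fintype.card_perm, Fintype.card_fin, mul_div_assoc]
    _ ≤ 9 * r + 1 := by gcongr; exact div_le_one_of_le₀ h_tail (by positivity)
    _ ≤ 19 * √n := by linarith

variable [NeZero n]

-- Each of the `lisLen σ` values of an optimal subsequence lies in `#X` of the translates.
lemma sum_lisLen_sub_lisLenAvoiding_le (X : Finset (Fin n)) (σ : Perm (Fin n)) :
    ∑ t, ((lisLen σ : ℝ) - lisLenAvoiding (X.image (Equiv.addRight t)) σ) ≤ #X * lisLen σ := by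
  obtain ⟨T, hT, h_card⟩ := exists_strictMonoOn_card_eq_lisLen σ
  have h_translate (t : Fin n) :
      (lisLen σ : ℝ) - lisLenAvoiding (X.image (Equiv.addRight t)) σ ≤
        ∑ i ∈ T, if σ i - t ∈ X then (1 : ℝ) else 0 := by
    have h_avoid : #{i ∈ T | σ i - t ∉ X} ≤ lisLenAvoiding (X.image (Equiv.addRight t)) σ := by
      refine card_le_lisLenAvoiding (hT.mono (coe_subset.2 (filter_subset _ _))) fun i hi hX ↦ ?_
      obtain ⟨x, hx, hxi⟩ := mem_image.1 hX
      exact (mem_filter.1 hi).2 (by simpa [← hxi] using hx)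
    rw [sum_boole, ← h_card, sub_le_iff_le_add, ← card_filter_add_card_filter_not (s := T)
      (fun i ↦ σ i - t ∈ X), Nat.cast_add]
    gcongr
  have h_hits (i : Fin n) : ∑ t, (if σ i - t ∈ X then (1 : ℝ) else 0) = #X :=
    (Equiv.sum_comp (Equiv.subLeft (σ i)) fun t ↦ if t ∈ X then (1 : ℝ) else 0).trans (by simp)
  calc _ ≤ ∑ t, ∑ i ∈ T, (if σ i - t ∈ X then (1 : ℝ) else 0) := sum_le_sum fun t _ ↦ h_translate t
    _ = #X * lisLen σ := by
      rw [sum_comm, sum_congr rfl fun i _ ↦ h_hits i, sum_const, nsmul_eq_mul, h_card, mul_comm]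

lemma expect_lisLen_sub_lisLenAvoiding_le (X : Finset (Fin n)) :
    𝔼 σ, ((lisLen σ : ℝ) - lisLenAvoiding X σ) ≤ #X / n * 𝔼 σ : Perm (Fin n), (lisLen σ : ℝ) := by
  have h_translate (t : Fin n) :
      𝔼 σ, ((lisLen σ : ℝ) - lisLenAvoiding (X.image (Equiv.addRight t)) σ) =
        𝔼 σ, ((lisLen σ : ℝ) - lisLenAvoiding X σ) := by
    rw [expect_sub_distrib, expect_sub_distrib, expect_lisLenAvoiding_eq_of_card_eq
      (card_image_of_injective X (Equiv.addRight t).injective)]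
  have hn : (0 : ℝ) < n := by exact_mod_cast Nat.pos_of_neZero n
  rw [div_mul_eq_mul_div, le_div_iff₀' hn]
  calc _ = ∑ t : Fin n, 𝔼 σ, ((lisLen σ : ℝ) - lisLenAvoiding (X.image (Equiv.addRight t)) σ) := by
        simp only [h_translate, sum_const, card_univ, nsmul_eq_mul, Fintype.card_fin]
    _ = 𝔼 σ, ∑ t : Fin n, ((lisLen σ : ℝ) - lisLenAvoiding (X.image (Equiv.addRight t)) σ) :=
        (expect_sum_comm _ _ _).symm
    _ ≤ 𝔼 σ : Perm (Fin n), (#X * lisLen σ : ℝ) :=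
        expect_le_expect fun σ _ ↦ sum_lisLen_sub_lisLenAvoiding_le X σ
    _ = _ := (mul_expect _ _ _).symm

lemma expect_lisLen_mul_ne_le {X : Finset (Fin n)} {g : Perm (Fin n)}
    (hg : StrictMonoOn g (X : Set (Fin n))ᶜ) :
    𝔼 σ, (if lisLen (g * σ) ≠ lisLen σ then (1 : ℝ) else 0) ≤
      2 * #X / n * 𝔼 σ : Perm (Fin n), (lisLen σ : ℝ) := by
  have h_indicator (σ : Perm (Fin n)) : (if lisLen (g * σ) ≠ lisLen σ then (1 : ℝ) else 0) ≤
      ((lisLen (g * σ) : ℝ) - lisLenAvoiding (X.image g) (g * σ)) +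
        ((lisLen σ : ℝ) - lisLenAvoiding X σ) := by
    have h_le := lisLenAvoiding_le_lisLen X σ
    have h_le' := lisLenAvoiding_le_lisLen (X.image g) (g * σ)
    rw [lisLenAvoiding_image_mul hg] at h_le' ⊢
    split_ifs with h_ne
    · have h_lt : lisLenAvoiding X σ + lisLenAvoiding X σ + 1 ≤ lisLen (g * σ) + lisLen σ := by lia
      rify at h_lt
      linarith
    · rify at h_le h_le'
      linarith
  have h_shift : 𝔼 σ, ((lisLen (g * σ) : ℝ) - lisLenAvoiding (X.image g) (g * σ)) =
      𝔼 σ, ((lisLen σ : ℝ) - lisLenAvoiding (X.image g) σ) :=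
    Fintype.expect_equiv (Equiv.mulLeft g) _ _ fun _ ↦ rfl
  have h_expect := expect_le_expect fun σ (_ : σ ∈ univ) ↦ h_indicator σ
  have h_image := expect_lisLen_sub_lisLenAvoiding_le (X.image g)
  rw [card_image_of_injective _ g.injective] at h_image
  rw [expect_add_distrib, h_shift] at h_expect
  refine (h_expect.trans (add_le_add h_image (expect_lisLen_sub_lisLenAvoiding_le X))).trans_eq ?_
  ring

lemma expect_lisLen_mul_ne_le_div_sqrt {X : Finset (Fin n)} {g : Perm (Fin n)}
    (hg : StrictMonoOn g (X : Set (Fin n))ᶜ) :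
    𝔼 σ, (if lisLen (g * σ) ≠ lisLen σ then (1 : ℝ) else 0) ≤ 38 * #X / √n := by
  have hn := Nat.pos_of_neZero n
  calc _ ≤ 2 * #X / n * (19 * √n) :=
        (expect_lisLen_mul_ne_le hg).trans (by gcongr; exact expect_lisLen_le hn)
    _ = 38 * #X * (√n / n) := by ring
    _ = 38 * #X / √n := by rw [Real.sqrt_div_self', mul_one_div]

end LIS

/-! ### Decorrelation from a class function by averaging over translates -/

lemma norm_sq_le_card {ι : Type*} [Fintype ι] {f : EuclideanSpace ℝ ι} (hf : ∀ σ, |f σ| ≤ 1) :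
    ‖f‖ ^ 2 ≤ Fintype.card ι := by
  rw [EuclideanSpace.real_norm_sq_eq]
  exact (sum_le_sum fun σ _ ↦ (sq_le_one_iff_abs_le_one _).2 (hf σ)).trans_eq (by simp)

lemma abs_expect_mul_le_expect_abs {ι : Type*} [Fintype ι] {u f : ι → ℝ} (hf : ∀ σ, |f σ| ≤ 1) :
    |𝔼 σ, u σ * f σ| ≤ 𝔼 σ, |u σ| :=
  (abs_expect_le _ _).trans <| expect_le_expect fun σ _ ↦ by
    rw [abs_mul]
    exact mul_le_of_le_one_right (abs_nonneg _) (hf σ)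

section Decorrelation

variable {G : Type*} [Group G] [Fintype G] {N : Subgroup G} [Fintype N]
variable {κ : Type*} [Fintype κ] {c : κ → G} {ε δ : ℝ}

lemma inner_leftReg_le_of_classGap {f : EuclideanSpace ℝ G} (hf : IsClassFunction f)
    (hNf : subgroupAverage (leftReg G) N f = 0) {g : G} (hg : ClassGap N g ε) :
    inner ℝ f (leftReg G g f) ≤ ε * ‖f‖ ^ 2 :=
  calc inner ℝ f (leftReg G g f) = inner ℝ f (classAverage (leftReg G) g f) :=
        (inner_classAverage_comp (MonoidHom.id G) hf g).symm
    _ ≤ ‖f‖ * ‖classAverage (leftReg G) g f‖ := real_inner_le_norm _ _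
    _ ≤ ‖f‖ * (ε * ‖f‖) := by gcongr; exact hg f hNf
    _ = ε * ‖f‖ ^ 2 := by ring

lemma norm_sq_average_leftReg_le [Nonempty κ] {f : EuclideanSpace ℝ G} (hf : IsClassFunction f)
    (hNf : subgroupAverage (leftReg G) N f = 0) (hε : 0 ≤ ε)
    (hc : ∀ i j, i ≠ j → ClassGap N ((c i)⁻¹ * c j) ε) :
    ‖average (leftReg G) c f‖ ^ 2 ≤ (1 / Fintype.card κ + ε) * ‖f‖ ^ 2 := by
  have h_pair (i j : κ) : inner ℝ (leftReg G (c i) f) (leftReg G (c j) f) ≤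
      (if i = j then ‖f‖ ^ 2 else 0) + ε * ‖f‖ ^ 2 := by
    split_ifs with h
    · rw [h, LinearIsometryEquiv.inner_map_map, real_inner_self_eq_norm_sq]
      exact le_add_of_nonneg_right (by positivity)
    · rw [zero_add, inner_rep_left, ← Function.comp_apply (f := leftReg G _),
        ← LinearIsometryEquiv.coe_mul, ← map_mul]
      exact inner_leftReg_le_of_classGap hf hNf (hc i j h)
  have h_sum : ‖∑ i, leftReg G (c i) f‖ ^ 2 ≤
      (Fintype.card κ + Fintype.card κ ^ 2 * ε) * ‖f‖ ^ 2 := by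
    rw [← real_inner_self_eq_norm_sq, sum_inner]
    calc _ ≤ ∑ i, ∑ j, ((if i = j then ‖f‖ ^ 2 else 0) + ε * ‖f‖ ^ 2) :=
          sum_le_sum fun i _ ↦ by rw [inner_sum]; exact sum_le_sum fun j _ ↦ h_pair i j
      _ = _ := by simp [sum_add_distrib]; ring
  rw [average_apply, norm_smul, norm_inv, Real.norm_natCast, mul_pow, inv_pow,
    inv_mul_le_iff₀ (by positivity)]
  refine h_sum.trans_eq ?_
  field_simp

lemma abs_inner_average_inv_leftReg_le [Nonempty κ] {u f : EuclideanSpace ℝ G}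
    (hu : ∀ σ, |u σ| ≤ 1) (hf : IsClassFunction f) (hf_le : ∀ σ, |f σ| ≤ 1)
    (hNf : subgroupAverage (leftReg G) N f = 0) (hε : 0 ≤ ε)
    (hc : ∀ i j, i ≠ j → ClassGap N ((c i)⁻¹ * c j) ε) :
    |inner ℝ (average (leftReg G) (fun i ↦ (c i)⁻¹) u) f| ≤
      √(1 / Fintype.card κ + ε) * Fintype.card G := by
  rw [inner_average_left]
  simp only [inv_inv]
  refine (abs_real_inner_le_norm _ _).trans (abs_le_of_sq_le_sq' ?_ (by positivity)).2
  calc (‖u‖ * ‖average (leftReg G) c f‖) ^ 2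
      ≤ Fintype.card G * ((1 / Fintype.card κ + ε) * Fintype.card G) := by
        rw [mul_pow]
        gcongr
        · exact norm_sq_le_card hu
        · exact (norm_sq_average_leftReg_le hf hNf hε hc).trans
            (by gcongr; exact norm_sq_le_card hf_le)
    _ = _ := by rw [mul_pow, Real.sq_sqrt (by positivity)]; ring

lemma expect_abs_expect_mul_sub_le [Nonempty κ] {u : G → ℝ}
    (hcu : ∀ i, 𝔼 σ, |u (c i * σ) - u σ| ≤ δ) : 𝔼 σ, |𝔼 i, u (c i * σ) - u σ| ≤ δ :=
  calc 𝔼 σ, |𝔼 i, u (c i * σ) - u σ| ≤ 𝔼 σ, 𝔼 i, |u (c i * σ) - u σ| := by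
        refine expect_le_expect fun σ _ ↦ ?_
        simpa only [expect_sub_distrib, Fintype.expect_const] using
          abs_expect_le univ fun i ↦ u (c i * σ) - u σ
    _ = 𝔼 i, 𝔼 σ, |u (c i * σ) - u σ| := expect_comm _ _ _
    _ ≤ δ := expect_le univ_nonempty fun i _ ↦ hcu i

-- `u` is close to its average over the translates, and moving that average to `f` makes it small.
lemma abs_expect_mul_le_of_classGap [Nonempty κ] {u f : EuclideanSpace ℝ G}
    (hu : ∀ σ, |u σ| ≤ 1) (hf : IsClassFunction f) (hf_le : ∀ σ, |f σ| ≤ 1)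
    (hNf : subgroupAverage (leftReg G) N f = 0) (hε : 0 ≤ ε)
    (hc : ∀ i j, i ≠ j → ClassGap N ((c i)⁻¹ * c j) ε)
    (hcu : ∀ i, 𝔼 σ, |u (c i * σ) - u σ| ≤ δ) :
    |𝔼 σ, u σ * f σ| ≤ δ + √(1 / Fintype.card κ + ε) := by
  set v := average (leftReg G) (fun i ↦ (c i)⁻¹) u with hv
  have hv_apply (σ : G) : v σ = 𝔼 i, u (c i * σ) := by simp [hv, average_leftReg_apply]
  have h_split : 𝔼 σ, u σ * f σ = 𝔼 σ, v σ * f σ - 𝔼 σ, (v σ - u σ) * f σ := by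
    rw [← expect_sub_distrib]
    exact expect_congr rfl fun σ _ ↦ by ring
  have h_close : |𝔼 σ, (v σ - u σ) * f σ| ≤ δ :=
    (abs_expect_mul_le_expect_abs hf_le).trans <| by
      simpa only [hv_apply] using expect_abs_expect_mul_sub_le hcu
  have h_inner : 𝔼 σ, v σ * f σ = inner ℝ v f / Fintype.card G := by
    rw [Fintype.expect_eq_sum_div_card, PiLp.inner_apply]
    simp [mul_comm]
  rw [h_split, h_inner, add_comm δ]
  refine (abs_sub _ _).trans (add_le_add ?_ h_close)
  rw [abs_div, Nat.abs_cast, div_le_iff₀ (by positivity)]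
  exact abs_inner_average_inv_leftReg_le hu hf hf_le hNf hε hc

lemma isClassFunction_sub_subgroupAverage [N.Normal] {f : EuclideanSpace ℝ G}
    (hf : IsClassFunction f) : IsClassFunction (f - subgroupAverage (leftReg G) N f) := by
  intro a σ
  rw [PiLp.sub_apply, PiLp.sub_apply, hf, subgroupAverage, average_leftReg_apply,
    average_leftReg_apply]
  refine congrArg (f σ - ·) (Fintype.expect_equiv (MulAut.conjNormal a⁻¹).toEquiv _ _ fun k ↦ ?_)
  rw [← hf a⁻¹]
  simp [MulAut.conjNormal_apply, mul_assoc]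

lemma subgroupAverage_leftReg_apply_mem_Icc {f : EuclideanSpace ℝ G}
    (hf : ∀ σ, f σ ∈ Set.Icc 0 1) (σ : G) :
    subgroupAverage (leftReg G) N f σ ∈ Set.Icc 0 1 := by
  rw [subgroupAverage, average_leftReg_apply]
  exact ⟨expect_nonneg fun k _ ↦ (hf _).1, expect_le univ_nonempty fun k _ ↦ (hf _).2⟩

lemma subgroupAverage_leftReg_apply_add_of_index_eq_two (hN : N.index = 2) {t : G} (ht : t ∉ N)
    (f : EuclideanSpace ℝ G) (σ : G) :
    subgroupAverage (leftReg G) N f σ + subgroupAverage (leftReg G) N f (t * σ) =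
      2 * 𝔼 τ, f τ := by
  have h_card : (Fintype.card G : ℝ) = 2 * Fintype.card N := by
    rw [← Nat.card_eq_fintype_card, ← Nat.card_eq_fintype_card, ← N.index_mul_card, hN]
    push_cast
    rfl
  have h_coset : ∑ k : {a // a ∉ N}, f ((k : G)⁻¹ * σ) = ∑ k : N, f ((k : G)⁻¹ * (t * σ)) := by
    refine (Fintype.sum_equiv ((Equiv.mulLeft t⁻¹).subtypeEquiv fun a ↦ ?_) _ _ fun k ↦ ?_).symm
    · simp [Subgroup.mul_mem_iff_of_index_two hN, ht]
    · simp [mul_assoc]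
  have h_sum : ∑ τ, f τ = ∑ k : N, f ((k : G)⁻¹ * σ) + ∑ k : N, f ((k : G)⁻¹ * (t * σ)) := by
    have h_shift : ∑ a, f (a⁻¹ * σ) = ∑ τ, f τ :=
      Equiv.sum_comp ((Equiv.inv G).trans (Equiv.mulRight σ)) f
    rw [← h_coset, ← h_shift]
    convert! (Fintype.sum_subtype_add_sum_subtype (· ∈ N) fun a ↦ f (a⁻¹ * σ)).symm
  simp only [subgroupAverage, average_leftReg_apply, Fintype.expect_eq_sum_div_card, h_sum, h_card]
  field_simp

lemma abs_expect_mul_subgroupAverage_sub_le (hN : N.index = 2) {t : G} (ht : t ∉ N)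
    {u f : EuclideanSpace ℝ G} (hf : ∀ σ, f σ ∈ Set.Icc 0 1)
    (htu : 𝔼 σ, |u (t * σ) - u σ| ≤ δ) :
    |𝔼 σ, u σ * subgroupAverage (leftReg G) N f σ - (𝔼 σ, u σ) * 𝔼 σ, f σ| ≤ δ / 2 := by
  set p := subgroupAverage (leftReg G) N f
  have hp_le (σ : G) : |p (t * σ)| ≤ 1 := by
    obtain ⟨h_nonneg, h_le⟩ := subgroupAverage_leftReg_apply_mem_Icc (N := N) hf (t * σ)
    rwa [abs_of_nonneg h_nonneg]
  have h_shift : 𝔼 σ, u (t * σ) * p (t * σ) = 𝔼 σ, u σ * p σ :=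
    Fintype.expect_equiv (Equiv.mulLeft t) _ _ fun _ ↦ rfl
  have h_mean : 2 * ((𝔼 σ, u σ) * 𝔼 σ, f σ) = 𝔼 σ, u σ * p σ + 𝔼 σ, u σ * p (t * σ) := by
    rw [mul_left_comm, expect_mul, ← expect_add_distrib]
    refine expect_congr rfl fun σ _ ↦ ?_
    rw [← subgroupAverage_leftReg_apply_add_of_index_eq_two hN ht f σ, mul_add]
  have h_eq : 2 * (𝔼 σ, u σ * p σ - (𝔼 σ, u σ) * 𝔼 σ, f σ) =
      𝔼 σ, (u (t * σ) - u σ) * p (t * σ) := by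
    simp only [sub_mul, expect_sub_distrib]
    linarith
  have h_le := (abs_expect_mul_le_expect_abs (u := fun σ ↦ u (t * σ) - u σ) hp_le).trans htu
  rw [← h_eq, abs_mul, abs_two] at h_le
  linarith

lemma abs_expect_mul_sub_expect_mul_expect_le [Nonempty κ] [N.Normal] (hN : N.index = 2)
    {u f : EuclideanSpace ℝ G} (hu : ∀ σ, |u σ| ≤ 1) (hf : IsClassFunction f)
    (hf_mem : ∀ σ, f σ ∈ Set.Icc 0 1) (hε : 0 ≤ ε)
    (hc : ∀ i j, i ≠ j → ClassGap N ((c i)⁻¹ * c j) ε)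
    (hcu : ∀ i, 𝔼 σ, |u (c i * σ) - u σ| ≤ δ) {t : G} (ht : t ∉ N) {δ' : ℝ}
    (htu : 𝔼 σ, |u (t * σ) - u σ| ≤ δ') :
    |𝔼 σ, u σ * f σ - (𝔼 σ, u σ) * 𝔼 σ, f σ| ≤
      δ + √(1 / Fintype.card κ + ε) + δ' / 2 := by
  set p := subgroupAverage (leftReg G) N f
  have h_le (σ : G) : |(f - p) σ| ≤ 1 := by
    obtain ⟨hp_nonneg, hp_le⟩ := subgroupAverage_leftReg_apply_mem_Icc (N := N) hf_mem σ
    rw [PiLp.sub_apply]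
    exact abs_sub_le_of_nonneg_of_le (hf_mem σ).1 (hf_mem σ).2 hp_nonneg hp_le
  have h_zero : subgroupAverage (leftReg G) N (f - p) = 0 :=
    symmetricProjection_apply_sub_self (symmetricProjection_subgroupAverage (leftReg G) N) f
  have h_orth := abs_expect_mul_le_of_classGap hu (isClassFunction_sub_subgroupAverage hf) h_le
    h_zero hε hc hcu
  have h_invariant := abs_expect_mul_subgroupAverage_sub_le hN ht hf_mem htu
  have h_split : 𝔼 σ, u σ * f σ - (𝔼 σ, u σ) * 𝔼 σ, f σ =
      𝔼 σ, u σ * (f - p) σ + (𝔼 σ, u σ * p σ - (𝔼 σ, u σ) * 𝔼 σ, f σ) := by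
    simp only [PiLp.sub_apply, mul_sub, expect_sub_distrib]
    ring
  rw [h_split]
  exact (abs_add_le _ _).trans (add_le_add h_orth h_invariant)

end Decorrelation

/-! ### The longest increasing subsequence and class functions -/

section Covariance

open Equiv

variable {n : ℕ}

lemma strictMonoOn_swap_zero_one (n : ℕ) :
    StrictMonoOn (swap (0 : Fin (n + 2)) 1)
      (({0} : Finset (Fin (n + 2))) : Set (Fin (n + 2)))ᶜ := by
  intro i hi j hj hij
  have hi0 : i ≠ 0 := by simpa using hi
  have hj0 : j ≠ 0 := by simpa using hj
  have hj1 : j ≠ 1 := fun h ↦ hi0 ((Fin.lt_one_iff i).1 (h ▸ hij))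
  rw [swap_apply_of_ne_of_ne hj0 hj1]
  by_cases hi1 : i = 1
  · rw [hi1, swap_apply_right]
    exact Fin.pos_of_ne_zero hj0
  · rwa [swap_apply_of_ne_of_ne hi0 hi1]

lemma exists_notMem_alternatingGroup_strictMonoOn (hn : 2 ≤ n) :
    ∃ t ∉ alternatingGroup (Fin n), ∃ X : Finset (Fin n), #X = 1 ∧
      StrictMonoOn t (X : Set (Fin n))ᶜ := by
  obtain ⟨m, rfl⟩ := Nat.exists_eq_add_of_le' hn
  exact ⟨swap 0 1, by simp [Perm.mem_alternatingGroup, Perm.sign_swap zero_ne_one, ← Units.val_inj],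
    {0}, card_singleton _, strictMonoOn_swap_zero_one m⟩

lemma Pn_eq_expect (p : Perm (Fin n) → Prop) : Pn p = 𝔼 σ, if p σ then (1 : ℝ) else 0 := by
  rw [Pn, Fintype.expect_eq_sum_div_card, sum_boole]

lemma Pn_and_eq_expect_mul (p q : Perm (Fin n) → Prop) : Pn (fun σ ↦ p σ ∧ q σ) =
    𝔼 σ, (if p σ then (1 : ℝ) else 0) * if q σ then 1 else 0 := by
  rw [Pn_eq_expect]
  exact expect_congr rfl fun σ _ ↦ by by_cases hp : p σ <;> simp [hp]

variable [NeZero n]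

lemma exists_strictMonoOn_addRight (d : Fin n) :
    ∃ X : Finset (Fin n), #X ≤ d ∧ StrictMonoOn (Equiv.addRight d) (X : Set (Fin n))ᶜ := by
  refine ⟨univ.filter fun x ↦ n ≤ x + d, ?_, fun i hi j hj hij ↦ ?_⟩
  · calc _ = #((univ.filter fun x : Fin n ↦ n ≤ x + d).map Fin.valEmbedding) := (card_map _).symm
      _ ≤ #(Ico (n - d) n) := card_le_card fun y hy ↦ by
        obtain ⟨x, hx, rfl⟩ := mem_map.1 hy
        have h_wrap := (mem_filter_univ _).1 hx
        exact mem_Ico.2 ⟨Nat.sub_le_iff_le_add.2 h_wrap, x.2⟩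
      _ ≤ d := by rw [Nat.card_Ico]; lia
  · have hi' : (i + d : ℕ) < n := by simpa using hi
    have hj' : (j + d : ℕ) < n := by simpa using hj
    rw [coe_addRight, Fin.lt_def, Fin.val_add_eq_of_add_lt hi',
      Fin.val_add_eq_of_add_lt hj']
    exact Nat.add_lt_add_right hij d

lemma classGap_addRight_inv_mul {M : ℕ} {x y : Fin n} (hxy : x ≠ y) (hx : x < M) (hy : y < M) :
    ClassGap (alternatingGroup (Fin n)) ((Equiv.addRight x : Perm (Fin n))⁻¹ * Equiv.addRight y)
      (46 * √(M / n) * (1 + Real.log n)) := by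
  have h_mul : (Equiv.addRight x : Perm (Fin n))⁻¹ * Equiv.addRight y = Equiv.addRight (y - x) := by
    ext z
    simp [sub_eq_add_neg, add_assoc]
  have h_gap := ClassGap.addRight (sub_ne_zero.2 hxy.symm)
  rw [h_mul]
  rw [Fintype.card_fin] at h_gap
  refine h_gap.mono ?_
  have h_order : (n : ℝ) ≤ addOrderOf (y - x) * M := mod_cast le_addOrderOf_sub_mul hxy.symm hy hx
  have h_pos : (0 : ℝ) < addOrderOf (y - x) := mod_cast addOrderOf_pos (y - x)
  have hn : (0 : ℝ) < n := mod_cast Nat.pos_of_neZero n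
  rw [div_eq_mul_inv, ← Real.sqrt_inv]
  gcongr
  rwa [le_div_iff₀ hn, inv_mul_le_iff₀ h_pos]

lemma expect_abs_boole_lisLen_mul_sub_le (A : Set ℕ) {X : Finset (Fin n)} {g : Perm (Fin n)}
    (hg : StrictMonoOn g (X : Set (Fin n))ᶜ) :
    𝔼 σ : Perm (Fin n), |(if lisLen (g * σ) ∈ A then (1 : ℝ) else 0) -
      if lisLen σ ∈ A then 1 else 0| ≤ 38 * #X / √n := by
  refine le_trans (expect_le_expect fun σ _ ↦ ?_) (expect_lisLen_mul_ne_le_div_sqrt hg)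
  by_cases h : lisLen (g * σ) = lisLen σ
  · simp [h]
  · rw [if_pos h]
    split_ifs <;> simp

lemma abs_Pn_lisLen_and_sub_le {κ : Type*} (hn : 2 ≤ n) {f : Perm (Fin n) → κ}
    (hf : IsClassFunction f) (A : Set ℕ) (B : Set κ) {M : ℕ} (hM : 0 < M) (hMn : M ≤ n) :
    |Pn (fun σ ↦ lisLen σ ∈ A ∧ f σ ∈ B) -
      Pn (fun σ : Perm (Fin n) ↦ lisLen σ ∈ A) * Pn (fun σ ↦ f σ ∈ B)| ≤
      38 * M / √n + √(1 / M + 46 * √(M / n) * (1 + Real.log n)) + 38 / √n / 2 := by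
  have : Nontrivial (Fin n) := Fin.nontrivial_iff_two_le.2 hn
  have : Nonempty (Fin M) := ⟨⟨0, hM⟩⟩
  have := Real.log_natCast_nonneg n
  obtain ⟨t, ht, X, hX, htX⟩ := exists_notMem_alternatingGroup_strictMonoOn hn
  let u : EuclideanSpace ℝ (Perm (Fin n)) :=
    WithLp.toLp 2 fun σ ↦ if lisLen σ ∈ A then (1 : ℝ) else 0
  let v : EuclideanSpace ℝ (Perm (Fin n)) := WithLp.toLp 2 fun σ ↦ if f σ ∈ B then (1 : ℝ) else 0
  let c (d : Fin M) : Perm (Fin n) := Equiv.addRight (d.castLE hMn)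
  have h_swap : 𝔼 σ, |u (t * σ) - u σ| ≤ 38 / √n := by
    simpa [hX] using expect_abs_boole_lisLen_mul_sub_le A htX
  have h_rotation (d : Fin M) : 𝔼 σ, |u (c d * σ) - u σ| ≤ 38 * M / √n := by
    obtain ⟨Y, hY, hdY⟩ := exists_strictMonoOn_addRight (d.castLE hMn)
    refine (expect_abs_boole_lisLen_mul_sub_le A hdY).trans ?_
    gcongr
    exact hY.trans d.2.le
  have h_gap (i j : Fin M) (hij : i ≠ j) : ClassGap (alternatingGroup (Fin n)) ((c i)⁻¹ * c j)
      (46 * √(M / n) * (1 + Real.log n)) :=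
    classGap_addRight_inv_mul ((Fin.castLE_injective hMn).ne hij) i.2 j.2
  have h_cov := abs_expect_mul_sub_expect_mul_expect_le (u := u) (f := v)
    alternatingGroup.index_eq_two
    (fun σ ↦ by simp only [u]; split_ifs <;> simp) (fun a σ ↦ by simp only [v, hf a σ])
    (fun σ ↦ by simp only [v]; split_ifs <;> simp) (by positivity) h_gap h_rotation ht h_swap
  rw [Fintype.card_fin] at h_cov
  rwa [Pn_and_eq_expect_mul, Pn_eq_expect, Pn_eq_expect]

end Covariance

lemma decorrelation_error_le {x L M : ℝ} (hx : 1 ≤ x) (hL : 1 / 2 ≤ L) (hM : x ^ 2 ≤ M)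
    (hM' : M ≤ 2 * x ^ 2) :
    38 * M / √(x ^ 6) + √(1 / M + 46 * √(M / x ^ 6) * (1 + L)) + 38 / √(x ^ 6) / 2 ≤
      214 * L / x := by
  have h_sqrt : √(x ^ 6) = x ^ 3 := by
    rw [show x ^ 6 = (x ^ 3) ^ 2 by ring, Real.sqrt_sq (by positivity)]
  have h_shift : 38 * M / x ^ 3 ≤ 152 * L / x := by
    rw [div_le_div_iff₀ (by positivity) (by positivity)]
    calc 38 * M * x ≤ 38 * (2 * x ^ 2) * x := by gcongr
      _ = 76 * x ^ 3 := by ring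
      _ ≤ 152 * L * x ^ 3 := by gcongr; linarith
  have h_sign : 38 / x ^ 3 / 2 ≤ 38 * L / x := by
    rw [div_div, div_le_div_iff₀ (by positivity) (by positivity)]
    calc 38 * x ≤ 38 * x ^ 3 := by gcongr; exact le_self_pow₀ hx (by norm_num)
      _ = 38 * (1 / 2) * (x ^ 3 * 2) := by ring
      _ ≤ 38 * L * (x ^ 3 * 2) := by gcongr
  have h_ratio : √(M / x ^ 6) ≤ 2 / x ^ 2 := by
    rw [Real.sqrt_le_left (by positivity)]
    calc M / x ^ 6 ≤ (4 * x ^ 2) / x ^ 6 := by gcongr; linarith [sq_nonneg x]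
      _ = (2 / x ^ 2) ^ 2 := by field_simp; norm_num
  have h_gap : √(1 / M + 46 * √(M / x ^ 6) * (1 + L)) ≤ 24 * L / x := by
    rw [Real.sqrt_le_left (by positivity)]
    calc 1 / M + 46 * √(M / x ^ 6) * (1 + L)
        ≤ 1 / x ^ 2 + 46 * (2 / x ^ 2) * (1 + L) := by gcongr
      _ = (93 + 92 * L) / x ^ 2 := by field_simp; ring
      _ ≤ (24 * L) ^ 2 / x ^ 2 := by gcongr; nlinarith
      _ = (24 * L / x) ^ 2 := by rw [div_pow]
  rw [h_sqrt]
  calc _ ≤ 152 * L / x + 24 * L / x + 38 * L / x := add_le_add (add_le_add h_shift h_gap) h_sign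
    _ = 214 * L / x := by ring

lemma exists_decorrelation_error_le {n : ℕ} (hn : 2 ≤ n) : ∃ M : ℕ, 0 < M ∧ M ≤ n ∧
    38 * M / √n + √(1 / M + 46 * √(M / n) * (1 + Real.log n)) + 38 / √n / 2 ≤
      214 * Real.log n / (n : ℝ) ^ ((1 : ℝ) / 6) := by
  have hn_two : (2 : ℝ) ≤ n := mod_cast hn
  have h_log : 1 / 2 ≤ Real.log n := by
    linarith [Real.log_le_log two_pos hn_two, Real.log_two_gt_d9]
  set x := (n : ℝ) ^ ((1 : ℝ) / 6) with hx
  have hx_one : 1 ≤ x := Real.one_le_rpow (by linarith) (by norm_num)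
  have hx_pow : x ^ 6 = n := by
    rw [hx, ← Real.rpow_natCast, ← Real.rpow_mul n.cast_nonneg]
    norm_num
  have h_ceil_le : (⌈x ^ 2⌉₊ : ℝ) ≤ 2 * x ^ 2 := by
    linarith [Nat.ceil_lt_add_one (by positivity : 0 ≤ x ^ 2), one_le_pow₀ (n := 2) hx_one]
  refine ⟨⌈x ^ 2⌉₊, Nat.ceil_pos.2 (by positivity),
    Nat.ceil_le.2 ((pow_le_pow_right₀ hx_one (by norm_num : 2 ≤ 6)).trans_eq hx_pow), ?_⟩
  have h_error := decorrelation_error_le hx_one h_log (Nat.le_ceil _) h_ceil_le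
  rwa [hx_pow] at h_error

theorem lisLenBar_asymp_indep_classFun_general {n : ℕ} (hn : 2 ≤ n) {κ : Type*}
    {f : Equiv.Perm (Fin n) → κ} (hf : IsClassFunction f) (A : Set ℝ) (B : Set κ) :
    |Pn (fun σ : Equiv.Perm (Fin n) => lisLenBar σ ∈ A ∧ f σ ∈ B) -
      Pn (fun σ : Equiv.Perm (Fin n) => lisLenBar σ ∈ A) * Pn (fun σ => f σ ∈ B)| ≤
      214 * Real.log n / (n : ℝ) ^ ((1 : ℝ) / 6) := by
  have : NeZero n := ⟨by lia⟩
  obtain ⟨M, hM, hMn, h_bound⟩ := exists_decorrelation_error_le hn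
  let normalize (k : ℕ) : ℝ := (k - En fun σ : Equiv.Perm (Fin n) => (lisLen σ : ℝ)) /
    √(VarN fun σ : Equiv.Perm (Fin n) => (lisLen σ : ℝ))
  exact (abs_Pn_lisLen_and_sub_le hn hf (normalize ⁻¹' A) B hM hMn).trans h_bound

/-- Any weakly convergent sequence of class functions is asymptotically independent of
the normalized Ulam statistic, at rate `log n / n^{1/6}`. -/
theorem lisLenBar_asymp_indep_classFun
    (f : ∀ n : ℕ, Equiv.Perm (Fin n) → ℝ)
    (hclass : ∀ n : ℕ, ∀ a σ : Equiv.Perm (Fin n), f n (a * σ * a⁻¹) = f n σ)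
    (hweak : ∃ μ : MeasureTheory.Measure ℝ, MeasureTheory.IsProbabilityMeasure μ ∧
      ∀ g : ℝ → ℝ, Continuous g → (∃ C : ℝ, ∀ x, |g x| ≤ C) →
        Tendsto (fun n : ℕ => En (fun σ => g (f n σ))) atTop (nhds (∫ x, g x ∂μ))) :
    ∃ C : ℝ, ∀ n : ℕ, 2 ≤ n → ∀ a b : ℝ,
      |Pn (fun σ : Equiv.Perm (Fin n) => lisLenBar σ ≤ a ∧ f n σ ≤ b) -
        Pn (fun σ : Equiv.Perm (Fin n) => lisLenBar σ ≤ a) *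
          Pn (fun σ : Equiv.Perm (Fin n) => f n σ ≤ b)| ≤
        C * Real.log n / (n : ℝ) ^ ((1 : ℝ) / 6) :=
  ⟨214, fun n hn a b =>
    lisLenBar_asymp_indep_classFun_general hn (hclass n) (Set.Iic a) (Set.Iic b)⟩
end

section
/- Let B ⊆ {1,2,3,...} ∪ {∞} and fix nonnegative reals m_j for j ∈ B. For each n, let P_n denote the uniform probability measure on S_n. Then the sequence n ↦ P_n[ρ_j(σ) < m_j for all j ∈ B] is weakly decreasing in n, i.e., P_{n+1}[ρ_j(σ) < m_j for all j ∈ B] ≤ P_n[ρ_j(σ) < m_j for all j ∈ B]. -/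
open scoped BigOperators Classical
open Finset Filter

/-- Spearman's uniform metric `ρ_∞(σ) = max_i |σ(i) − i|` (as a natural number). -/
def rhoInf {n : ℕ} (σ : Equiv.Perm (Fin n)) : ℕ :=
  Finset.univ.sup fun i : Fin n => (((σ i : ℕ) : ℤ) - ((i : ℕ) : ℤ)).natAbs

/-- Spearman's metric with index `j ∈ {1,2,3,…} ∪ {∞}`: for finite `j` it is
`ρ_j(σ) = Σ_i |σ(i) − i|^j`, and for `j = ∞` it is `ρ_∞(σ) = max_i |σ(i) − i|`. -/
noncomputable def rhoGen (j : ℕ∞) {n : ℕ} (σ : Equiv.Perm (Fin n)) : ℝ :=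
  if j = ⊤ then (rhoInf σ : ℝ)
  else ∑ i : Fin n, |((σ i : ℕ) : ℝ) - ((i : ℕ) : ℝ)| ^ (j.toNat)

/-!
Cutting `0` out of its cycle and shifting the remaining labels down maps `S_{n+1}` onto `S_n`
with all fibres of size `n + 1`, hence preserves uniform probability, and it increases none of
the metrics. Indeed every displacement `|σ i - i|` with `σ i ≠ 0`, `i ≠ 0` survives unchanged, and
if `0` lies between `k` and `l` in its cycle, then the new displacement `|l - k|` is at most the
larger of the two displacements `k` and `l` that it replaces. So the displacements of the shorter
permutation are dominated by distinct displacements of the longer one.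
-/

/-- The permutation of `Fin n` obtained by cutting `0` out of its cycle in `σ` and relabelling
each remaining `x.succ` as `x`. -/
def eraseZero {n : ℕ} (σ : Equiv.Perm (Fin (n + 1))) : Equiv.Perm (Fin n) :=
  (Equiv.Perm.decomposeFin σ).2

/-- The distance `|σ i - i|` by which `σ` moves `i`, as a natural number; Spearman's metrics are
the sums of powers and the maximum of these distances. -/
def displacement {n : ℕ} (σ : Equiv.Perm (Fin n)) (i : Fin n) : ℕ :=
  (((σ i : ℕ) : ℤ) - ((i : ℕ) : ℤ)).natAbs

theorem rhoGen_of_ne_top {n : ℕ} (σ : Equiv.Perm (Fin n)) {j : ℕ∞} (hj : j ≠ ⊤) :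
    rhoGen j σ = ∑ i, (displacement σ i : ℝ) ^ j.toNat := by
  simp [rhoGen, hj, displacement, Nat.cast_natAbs]

section Probability

variable {n : ℕ}

theorem Pn_mono {p q : Equiv.Perm (Fin n) → Prop} (h : ∀ σ, p σ → q σ) : Pn p ≤ Pn q := by
  unfold Pn
  gcongr with σ
  exact h σ

theorem card_filter_eraseZero (q : Equiv.Perm (Fin n) → Prop) :
    #{σ : Equiv.Perm (Fin (n + 1)) | q (eraseZero σ)} = (n + 1) * #{τ | q τ} := by
  have card_eq : #{σ : Equiv.Perm (Fin (n + 1)) | q (eraseZero σ)} =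
      #((univ : Finset (Fin (n + 1))) ×ˢ ({τ | q τ} : Finset (Equiv.Perm (Fin n)))) :=
    card_equiv Equiv.Perm.decomposeFin fun σ => by
      simp only [mem_filter_univ, mem_product, mem_univ, true_and]
      rfl
  rw [card_eq, card_product, card_univ, Fintype.card_fin]

theorem Pn_eraseZero (q : Equiv.Perm (Fin n) → Prop) :
    Pn (fun σ : Equiv.Perm (Fin (n + 1)) => q (eraseZero σ)) = Pn q := by
  simp only [Pn, card_filter_eraseZero, Fintype.card_perm, Fintype.card_fin, Nat.factorial_succ,
    Nat.cast_mul]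
  exact mul_div_mul_left _ _ (Nat.cast_ne_zero.mpr n.succ_ne_zero)

end Probability

section Metrics

variable {n : ℕ} (σ : Equiv.Perm (Fin (n + 1)))

theorem succ_eraseZero_apply (x : Fin n) :
    (eraseZero σ x).succ = if σ x.succ = 0 then σ 0 else σ x.succ := by
  obtain ⟨⟨i, τ⟩, rfl⟩ := Equiv.Perm.decomposeFin.symm.surjective σ
  simp only [eraseZero, Equiv.apply_symm_apply, Equiv.Perm.decomposeFin_symm_apply_zero,
    Equiv.Perm.decomposeFin_symm_apply_succ, Equiv.swap_apply_eq_iff, Equiv.swap_apply_left]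
  split_ifs with h
  · exact h
  · exact (Equiv.swap_apply_of_ne_of_ne (Fin.succ_ne_zero _) h).symm

theorem displacement_eraseZero_of_ne_zero {x : Fin n} (hx : σ x.succ ≠ 0) :
    displacement (eraseZero σ) x = displacement σ x.succ := by
  have image_eq := congrArg Fin.val (succ_eraseZero_apply σ x)
  rw [if_neg hx, Fin.val_succ] at image_eq
  simp only [displacement, ← image_eq, Fin.val_succ]
  omega

theorem displacement_eraseZero_le_max {x : Fin n} (hx : σ x.succ = 0) :
    displacement (eraseZero σ) x ≤ max (displacement σ 0) (displacement σ x.succ) := by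
  have image_eq := congrArg Fin.val (succ_eraseZero_apply σ x)
  rw [if_pos hx, Fin.val_succ] at image_eq
  simp only [displacement, hx, ← image_eq, Fin.val_succ, Fin.val_zero]
  omega

theorem exists_embedding_displacement_eraseZero_le :
    ∃ ψ : Fin n ↪ Fin (n + 1), ∀ x, displacement (eraseZero σ) x ≤ displacement σ (ψ x) := by
  let replaced (x : Fin n) : Prop := σ x.succ = 0 ∧ displacement σ x.succ ≤ displacement σ 0
  have replaced_unique {x y : Fin n} (hx : replaced x) (hy : replaced y) : x = y :=
    Fin.succ_injective n (σ.injective (hx.1.trans hy.1.symm))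
  let ψ (x : Fin n) : Fin (n + 1) := if replaced x then 0 else x.succ
  have ψ_injective : Function.Injective ψ := by
    intro x y hxy
    simp only [ψ] at hxy
    split_ifs at hxy with hx hy hy
    · exact replaced_unique hx hy
    · exact absurd hxy.symm (Fin.succ_ne_zero y)
    · exact absurd hxy (Fin.succ_ne_zero x)
    · exact Fin.succ_injective n hxy
  refine ⟨⟨ψ, ψ_injective⟩, fun x => ?_⟩
  change _ ≤ displacement σ (if replaced x then 0 else x.succ)
  by_cases hx : σ x.succ = 0
  · have le_max := displacement_eraseZero_le_max σ hx
    split_ifs with h_le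
    · rwa [max_eq_left h_le.2] at le_max
    · have h_lt : displacement σ 0 < displacement σ x.succ := not_le.mp fun h => h_le ⟨hx, h⟩
      rwa [max_eq_right h_lt.le] at le_max
  · rw [if_neg fun h => hx h.1, displacement_eraseZero_of_ne_zero σ hx]

theorem rhoInf_eraseZero_le : rhoInf (eraseZero σ) ≤ rhoInf σ := by
  obtain ⟨ψ, hψ⟩ := exists_embedding_displacement_eraseZero_le σ
  exact Finset.sup_le fun x _ => (hψ x).trans (le_sup (f := displacement σ) (mem_univ (ψ x)))

theorem sum_displacement_eraseZero_le {M : Type*} [AddCommMonoid M] [PartialOrder M]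
    [IsOrderedAddMonoid M] {f : ℕ → M} (hf : Monotone f) (hf_nonneg : ∀ k, 0 ≤ f k) :
    ∑ x, f (displacement (eraseZero σ) x) ≤ ∑ y, f (displacement σ y) := by
  obtain ⟨ψ, hψ⟩ := exists_embedding_displacement_eraseZero_le σ
  calc ∑ x, f (displacement (eraseZero σ) x)
      ≤ ∑ x, f (displacement σ (ψ x)) := sum_le_sum fun x _ => hf (hψ x)
    _ = ∑ y ∈ univ.map ψ, f (displacement σ y) := by rw [sum_map]
    _ ≤ ∑ y, f (displacement σ y) :=
      sum_le_sum_of_subset_of_nonneg (subset_univ _) fun _ _ _ => hf_nonneg _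

theorem rhoGen_eraseZero_le (j : ℕ∞) : rhoGen j (eraseZero σ) ≤ rhoGen j σ := by
  by_cases hj : j = ⊤
  · simpa only [rhoGen, if_pos hj, Nat.cast_le] using rhoInf_eraseZero_le σ
  · simp only [rhoGen_of_ne_top _ hj]
    have pow_monotone : Monotone fun k : ℕ => (k : ℝ) ^ j.toNat := fun _ _ h => by
      dsimp only
      gcongr
    exact sum_displacement_eraseZero_le σ pow_monotone fun _ => by positivity

end Metrics

/-- For any set `B ⊆ {1,2,3,…} ∪ {∞}` of indices and any nonnegative thresholds
`m_j`, `j ∈ B`, the probability `P_n[ρ_j(σ) < m_j for all j ∈ B]` is weakly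
decreasing in `n`. -/
theorem rho_joint_cdf_antitone (B : Set ℕ∞) (hB : ∀ j ∈ B, 1 ≤ j)
    (m : ℕ∞ → ℝ) (hm : ∀ j ∈ B, 0 ≤ m j) :
    Antitone (fun n : ℕ =>
      Pn (fun σ : Equiv.Perm (Fin n) => ∀ j ∈ B, rhoGen j σ < m j)) := by
  refine antitone_nat_of_succ_le fun n => ?_
  calc Pn (fun σ : Equiv.Perm (Fin (n + 1)) => ∀ j ∈ B, rhoGen j σ < m j)
      ≤ Pn (fun σ : Equiv.Perm (Fin (n + 1)) => ∀ j ∈ B, rhoGen j (eraseZero σ) < m j) :=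
        Pn_mono fun σ hσ j hj => (rhoGen_eraseZero_le σ j).trans_lt (hσ j hj)
    _ = Pn (fun τ : Equiv.Perm (Fin n) => ∀ j ∈ B, rhoGen j τ < m j) :=
        Pn_eraseZero fun τ => ∀ j ∈ B, rhoGen j τ < m j
end
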